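/- arXiv:1011.5479 — 2 statements merged into one kernel-verified Lean document; each statement's English description precedes it below -/
import Mathlib

section
/- Let N ≥ 1 and let ζ_1, …, ζ_N, γ_1, …, γ_N be real numbers with |ζ_1| > |γ_1| > |ζ_2| > |γ_2| > … > |ζ_N| > |γ_N| > 0. Then there exists a unique real-valued sequence c ∈ h^{1/2} such that the self-adjoint operator Γ_c has rank N with nonzero eigenvalues exactly ζ_1, …, ζ_N, and the self-adjoint operator Γ̃_c has rank N with nonzero eigenvalues exactly γ_1, …, γ_N. -/
open scoped InnerProductSpace ComplexConjugate ENNReal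

noncomputable section

/-- The Hilbert space `ℓ²(ℕ, ℂ)`. -/
abbrev L2 : Type := lp (fun _ : ℕ => ℂ) 2

/-- Membership in the space `h^{1/2}`: `c ∈ ℓ²` and `Σ n |c_n|² < ∞`. -/
def InH12 (c : ℕ → ℂ) : Prop :=
  Memℓp c 2 ∧ Summable (fun n : ℕ => (n : ℝ) * ‖c n‖ ^ 2)

/-- `Γ` is the Hankel operator of symbol `c`: `(Γ x)_n = Σ_p c_{n+p} x_p`. -/
def IsHankelOp (c : ℕ → ℂ) (Γ : L2 →L[ℂ] L2) : Prop :=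
  ∀ x : L2, ∀ n : ℕ, (Γ x : ℕ → ℂ) n = ∑' p : ℕ, c (n + p) * (x : ℕ → ℂ) p

/-- The shifted sequence `c̃ : n ↦ c_{n+1}`. -/
def shiftSeq (c : ℕ → ℂ) : ℕ → ℂ := fun n => c (n + 1)


section HankelAux

open Finset Polynomial in
lemma cauchy_exists {N : ℕ} (x y : Fin N → ℝ) (hx : Function.Injective x)
    (hxy : ∀ j k, x j ≠ y k) (k : Fin N) :
    ∑ j, (Lagrange.nodalWeight univ x j * eval (x j) (Lagrange.nodal univ y)) / (x j - y k) = 1 := by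
  have hdeg : (Lagrange.nodal univ y - Lagrange.nodal univ x).degree < #(univ : Finset (Fin N)) := by
    have h0 : (Lagrange.nodal univ y).degree = #(univ : Finset (Fin N)) := Lagrange.degree_nodal
    have h1 : (Lagrange.nodal univ x).degree = #(univ : Finset (Fin N)) := Lagrange.degree_nodal
    rw [← h0]
    apply degree_sub_lt_left (h0.trans h1.symm) Lagrange.nodal_ne_zero
    rw [Lagrange.nodal_monic.leadingCoeff, Lagrange.nodal_monic.leadingCoeff]
  have h := Lagrange.eq_interpolate (v := x) (hx.injOn) hdeg
  have h2 := congrArg (eval (y k)) h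
  rw [Lagrange.eval_interpolate_not_at_node _ (fun i _ => (hxy i k).symm)] at h2
  rw [eval_sub, Lagrange.eval_nodal_at_node (mem_univ k)] at h2
  have h3 : eval (y k) (Lagrange.nodal univ x) ≠ 0 :=
    Lagrange.eval_nodal_not_at_node (fun i _ => (hxy i k).symm)
  have h4 : ∑ i, Lagrange.nodalWeight univ x i * (y k - x i)⁻¹ *
      eval (x i) (Lagrange.nodal univ y - Lagrange.nodal univ x) = -1 := by
    apply mul_left_cancel₀ h3
    rw [← h2]; ring
  rw [← neg_inj, ← h4, ← Finset.sum_neg_distrib]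
  apply Finset.sum_congr rfl
  intro j _
  rw [eval_sub, Lagrange.eval_nodal_at_node (mem_univ j), ← neg_sub (x j) (y k), inv_neg]
  ring

open Finset Polynomial in
lemma cauchy_unique {N : ℕ} (x y d : Fin N → ℝ) (hx : Function.Injective x)
    (hy : Function.Injective y)
    (hxy : ∀ j k, x j ≠ y k) (hd : ∀ k, ∑ j, d j / (x j - y k) = 0) : d = 0 := by
  have hw : ∀ j, Lagrange.nodalWeight univ x j ≠ 0 :=
    fun j => Lagrange.nodalWeight_ne_zero hx.injOn (mem_univ j)
  set r : Fin N → ℝ := fun j => d j / Lagrange.nodalWeight univ x j with hr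
  have h0 : Lagrange.interpolate univ x r = 0 := by
    apply eq_zero_of_degree_lt_of_eval_index_eq_zero (v := y) (s := univ) hy.injOn
    · exact Lagrange.degree_interpolate_lt _ hx.injOn
    · intro k _
      rw [Lagrange.eval_interpolate_not_at_node _ (fun i _ => (hxy i k).symm)]
      apply mul_eq_zero_of_right
      rw [← neg_eq_zero, ← hd k, ← Finset.sum_neg_distrib]
      apply Finset.sum_congr rfl
      intro j _
      have := hw j
      rw [hr, ← neg_sub (x j) (y k), inv_neg]
      field_simp
  funext j
  have h1 := Lagrange.eval_interpolate_at_node r hx.injOn (mem_univ j)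
  rw [h0, eval_zero] at h1
  have := hw j
  rw [hr] at h1
  field_simp at h1
  simpa using h1.symm

open Finset Polynomial in
lemma weight_pos {N : ℕ} (x y : Fin N → ℝ) (hxy : ∀ j, y j < x j)
    (hlt : ∀ j k, j < k → x k < y j) (j : Fin N) :
    0 < Lagrange.nodalWeight univ x j * eval (x j) (Lagrange.nodal univ y) := by
  rw [Lagrange.nodalWeight, Lagrange.eval_nodal, ← Finset.mul_prod_erase univ _ (mem_univ j),
    mul_left_comm, ← Finset.prod_mul_distrib]
  apply mul_pos (sub_pos.2 (hxy j))
  apply Finset.prod_pos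
  intro k hk
  have hk' : k ≠ j := (Finset.mem_erase.1 hk).1
  rcases lt_or_gt_of_ne hk' with h | h
  · have h1 := hlt k j h
    have h2 := hxy k
    exact mul_pos_of_neg_of_neg (inv_lt_zero.2 (by linarith)) (by linarith)
  · have h1 := hlt j k h
    have h2 := hxy k
    have h3 := hxy j
    exact mul_pos (inv_pos.2 (by linarith)) (by linarith)

/-- Diagonal operators in an orthonormal family. -/
lemma diag_op {N : ℕ} (v : Fin N → L2) (hv : Orthonormal ℂ v) (l : Fin N → ℝ)
    (hl : ∀ j, l j ≠ 0) (K : L2 →L[ℂ] L2) (hK : ∀ x, K x = ∑ j, ((l j : ℂ) * ⟪v j, x⟫_ℂ) • v j) :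
    LinearMap.rank K.toLinearMap = N ∧
        {z : ℂ | z ≠ 0 ∧ Module.End.HasEigenvalue K.toLinearMap z}
          = Set.range (fun j : Fin N => (l j : ℂ)) := by
  have hKv : ∀ j, K (v j) = (l j : ℂ) • v j := by
    intro j
    rw [hK]
    rw [Finset.sum_eq_single j]
    · rw [orthonormal_iff_ite.1 hv]; simp
    · intro i _ hij
      rw [orthonormal_iff_ite.1 hv]; simp [hij]
    · simp
  have hl' : ∀ j, (l j : ℂ) ≠ 0 := fun j => by exact_mod_cast hl j
  constructor
  · have hr : LinearMap.range K.toLinearMap = Submodule.span ℂ (Set.range v) := by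
      apply le_antisymm
      · rintro _ ⟨x, rfl⟩
        simp only [ContinuousLinearMap.coe_coe]
        rw [hK]
        exact Submodule.sum_mem _ (fun j _ => Submodule.smul_mem _ _ (Submodule.subset_span ⟨j, rfl⟩))
      · rw [Submodule.span_le]
        rintro _ ⟨j, rfl⟩
        refine ⟨(l j : ℂ)⁻¹ • v j, ?_⟩
        simp only [ContinuousLinearMap.coe_coe, map_smul]
        rw [hKv, smul_smul, inv_mul_cancel₀ (hl' j), one_smul]
    rw [LinearMap.rank, hr, rank_span hv.linearIndependent, Cardinal.mk_range_eq _ hv.linearIndependent.injective]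
    simp
  · ext z
    constructor
    · rintro ⟨hz, he⟩
      obtain ⟨x, hx⟩ := he.exists_hasEigenvector
      have hxe : K x = z • x := hx.apply_eq_smul
      by_contra hcon
      have h0 : ∀ j, ⟪v j, x⟫_ℂ = 0 := by
        intro j
        have h1 : ⟪v j, K x⟫_ℂ = z * ⟪v j, x⟫_ℂ := by rw [hxe, inner_smul_right]
        have h2 : ⟪v j, K x⟫_ℂ = (l j : ℂ) * ⟪v j, x⟫_ℂ := by
          rw [hK, hv.inner_right_fintype]
        have h3 : (z - l j) * ⟪v j, x⟫_ℂ = 0 := by rw [sub_mul, ← h1, ← h2, sub_self]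
        rcases mul_eq_zero.1 h3 with h | h
        · exact absurd ⟨j, (sub_eq_zero.1 h).symm⟩ hcon
        · exact h
      have h1 : K x = 0 := by rw [hK]; simp [h0]
      rw [hxe] at h1
      rcases smul_eq_zero.1 h1 with h | h
      · exact hz h
      · exact hx.2 h
    · rintro ⟨j, rfl⟩
      refine ⟨hl' j, ?_⟩
      apply Module.End.hasEigenvalue_of_hasEigenvector (x := v j)
      exact ⟨Module.End.mem_eigenspace_iff.2 (hKv j), hv.ne_zero j⟩

/-- Converse: spectral form of a symmetric operator of rank `N` with `N` distinct eigenvalues. -/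
lemma op_diag {N : ℕ} (l : Fin N → ℝ) (hl : ∀ j, l j ≠ 0) (hinj : Function.Injective l)
    (K : L2 →L[ℂ] L2) (hsym : ∀ x y, ⟪K x, y⟫_ℂ = ⟪x, K y⟫_ℂ)
    (hrank : LinearMap.rank K.toLinearMap = N)
    (hev : {z : ℂ | z ≠ 0 ∧ Module.End.HasEigenvalue K.toLinearMap z}
          = Set.range (fun j : Fin N => (l j : ℂ))) :
    ∃ v : Fin N → L2, Orthonormal ℂ v ∧ (∀ j, K (v j) = (l j : ℂ) • v j) ∧
      ∀ x, K x = ∑ j, ((l j : ℂ) * ⟪v j, x⟫_ℂ) • v j := by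
  have hl' : ∀ j, (l j : ℂ) ≠ 0 := fun j => by exact_mod_cast hl j
  have h1 : ∀ j, ∃ x : L2, ‖x‖ = 1 ∧ K x = (l j : ℂ) • x := by
    intro j
    have : (l j : ℂ) ∈ {z : ℂ | z ≠ 0 ∧ Module.End.HasEigenvalue K.toLinearMap z} := by
      rw [hev]; exact ⟨j, rfl⟩
    obtain ⟨x, hx⟩ := this.2.exists_hasEigenvector
    have hxe : K x = (l j : ℂ) • x := hx.apply_eq_smul
    refine ⟨((‖x‖ : ℂ)⁻¹) • x, ?_, ?_⟩
    · exact norm_smul_inv_norm hx.2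
    · rw [map_smul, hxe, smul_comm]
  choose v hv1 hKv using h1
  have hv : Orthonormal ℂ v := by
    refine ⟨hv1, ?_⟩
    intro i j hij
    have h := hsym (v i) (v j)
    rw [hKv, hKv, inner_smul_left, inner_smul_right, Complex.conj_ofReal] at h
    have h3 : ((l i : ℂ) - l j) * ⟪v i, v j⟫_ℂ = 0 := by rw [sub_mul, h, sub_self]
    rcases mul_eq_zero.1 h3 with h | h
    · exact absurd (hinj (by exact_mod_cast sub_eq_zero.1 h)) hij
    · exact h
  refine ⟨v, hv, hKv, ?_⟩
  have hle : Submodule.span ℂ (Set.range v) ≤ LinearMap.range K.toLinearMap := by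
    rw [Submodule.span_le]
    rintro _ ⟨j, rfl⟩
    refine ⟨(l j : ℂ)⁻¹ • v j, ?_⟩
    simp only [ContinuousLinearMap.coe_coe, map_smul]
    rw [hKv, smul_smul, inv_mul_cancel₀ (hl' j), one_smul]
  have hfr : Module.finrank ℂ (LinearMap.range K.toLinearMap) = N := by
    rw [Module.finrank, ← LinearMap.rank, hrank]; simp
  have hfin : FiniteDimensional ℂ (LinearMap.range K.toLinearMap) := by
    apply Module.rank_lt_aleph0_iff.1
    rw [← LinearMap.rank, hrank]
    exact Cardinal.natCast_lt_aleph0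
  have hr : Submodule.span ℂ (Set.range v) = LinearMap.range K.toLinearMap := by
    apply Submodule.eq_of_le_of_finrank_eq hle
    rw [hfr, finrank_span_eq_card hv.linearIndependent]; simp
  intro x
  have hx : K x ∈ Submodule.span ℂ (Set.range v) := by rw [hr]; exact ⟨x, rfl⟩
  obtain ⟨a, ha⟩ := (Submodule.mem_span_range_iff_exists_fun ℂ).1 hx
  rw [← ha]
  apply Finset.sum_congr rfl
  intro j _
  congr 1
  have h2 : ⟪v j, K x⟫_ℂ = a j := by rw [← ha, hv.inner_right_fintype]
  rw [← h2, ← hsym, hKv, inner_smul_left, Complex.conj_ofReal]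


lemma hankel_symm (c : ℕ → ℝ) (G : L2 →L[ℂ] L2) (hG : IsHankelOp (fun n => (c n : ℂ)) G)
    (x y : L2) : ⟪G x, y⟫_ℂ = ⟪x, G y⟫_ℂ := by
  have hs : ∀ n p, (G (lp.single 2 n (1 : ℂ)) : ℕ → ℂ) p = (c (n + p) : ℂ) := by
    intro n p
    rw [hG, tsum_eq_single n]
    · simp [add_comm]
    · intro b hb
      rw [lp.single_apply_ne _ _ _ hb, mul_zero]
  have h : ContinuousLinearMap.adjoint G = G := by
    ext z n
    have h1 : ⟪lp.single (E := fun _ : ℕ => ℂ) 2 n (1 : ℂ), ContinuousLinearMap.adjoint G z⟫_ℂ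
        = (ContinuousLinearMap.adjoint G z : ℕ → ℂ) n := by
      rw [lp.inner_single_left]; simp
    rw [← h1, ContinuousLinearMap.adjoint_inner_right, lp.inner_eq_tsum, hG]
    apply tsum_congr
    intro p
    rw [hs]
    simp [mul_comm]
  rw [← ContinuousLinearMap.adjoint_inner_right, h]

lemma hankel_shift (c : ℕ → ℂ) (G Gt : L2 →L[ℂ] L2) (hG : IsHankelOp c G)
    (hGt : IsHankelOp (shiftSeq c) Gt) (x : L2) (n : ℕ) :
    (Gt x : ℕ → ℂ) n = (G x : ℕ → ℂ) (n + 1) := by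
  rw [hG, hGt]
  apply tsum_congr
  intro p
  simp only [shiftSeq]
  rw [show n + p + 1 = n + 1 + p by ring]

lemma inner_split (a b a' b' : L2) (ha : ∀ n, (a' : ℕ → ℂ) n = (a : ℕ → ℂ) (n + 1))
    (hb : ∀ n, (b' : ℕ → ℂ) n = (b : ℕ → ℂ) (n + 1)) :
    ⟪a, b⟫_ℂ = conj ((a : ℕ → ℂ) 0) * (b : ℕ → ℂ) 0 + ⟪a', b'⟫_ℂ := by
  have hs : Summable (fun i => ⟪(a : ℕ → ℂ) i, (b : ℕ → ℂ) i⟫_ℂ) := lp.summable_inner (𝕜 := ℂ) a b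
  rw [lp.inner_eq_tsum, lp.inner_eq_tsum, hs.tsum_eq_zero_add]
  congr 1
  · simp [mul_comm]
  · apply tsum_congr
    intro n
    rw [ha, hb]

lemma solution_form {N : ℕ} (ζ γ : Fin N → ℝ) (hζ : ∀ j, ζ j ≠ 0) (hγ : ∀ j, γ j ≠ 0)
    (hζi : Function.Injective ζ) (hγi : Function.Injective γ)
    (hne : ∀ j k, ζ j ^ 2 ≠ γ k ^ 2) (c : ℕ → ℝ) (G Gt : L2 →L[ℂ] L2)
    (hG : IsHankelOp (fun n => (c n : ℂ)) G)
    (hGt : IsHankelOp (shiftSeq fun n => (c n : ℂ)) Gt)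
    (hr : LinearMap.rank G.toLinearMap = N)
    (he : {z : ℂ | z ≠ 0 ∧ Module.End.HasEigenvalue G.toLinearMap z}
          = Set.range (fun j : Fin N => (ζ j : ℂ)))
    (hrt : LinearMap.rank Gt.toLinearMap = N)
    (het : {z : ℂ | z ≠ 0 ∧ Module.End.HasEigenvalue Gt.toLinearMap z}
          = Set.range (fun j : Fin N => (γ j : ℂ))) :
    ∃ (w q : Fin N → ℝ) (g : ℕ → Fin N → ℂ),
      (∀ k, ∑ j, w j / (ζ j ^ 2 - γ k ^ 2) = 1) ∧
      (∀ k, q k * ∑ j, w j / (ζ j ^ 2 - γ k ^ 2) ^ 2 = 1) ∧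
      (∀ j, g 0 j = w j / ζ j) ∧
      (∀ n j, g (n + 1) j = (w j / ζ j : ℂ) * ∑ k, ∑ i,
        ((γ k * q k : ℝ) : ℂ) / (((ζ j ^ 2 - γ k ^ 2 : ℝ) : ℂ) * ((ζ i ^ 2 - γ k ^ 2 : ℝ) : ℂ))
          * g n i) ∧
      (∀ n, (c n : ℂ) = ∑ j, g n j) := by
  have hsym := hankel_symm c G hG
  have hsymt : ∀ x y, ⟪Gt x, y⟫_ℂ = ⟪x, Gt y⟫_ℂ :=
    hankel_symm (fun n => c (n + 1)) Gt hGt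
  have hsh := hankel_shift _ G Gt hG hGt
  obtain ⟨e, heo, heG, hGe⟩ := op_diag ζ hζ hζi G hsym hr he
  obtain ⟨f, hfo, hfG, hGf⟩ := op_diag γ hγ hγi Gt hsymt hrt het
  have hζ' : ∀ j, (ζ j : ℂ) ≠ 0 := fun j => by exact_mod_cast hζ j
  have hγ' : ∀ j, (γ j : ℂ) ≠ 0 := fun j => by exact_mod_cast hγ j
  have hD : ∀ j k, ((ζ j ^ 2 - γ k ^ 2 : ℝ) : ℂ) ≠ 0 := fun j k => by
    exact_mod_cast sub_ne_zero.2 (hne j k)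
  have hD' : ∀ j k, (ζ j ^ 2 - γ k ^ 2 : ℝ) ≠ 0 := fun j k => sub_ne_zero.2 (hne j k)
  -- coefficients
  set α : Fin N → ℂ := fun j => (G (e j) : ℕ → ℂ) 0 with hα
  set β : Fin N → ℂ := fun k => (G (f k) : ℕ → ℂ) 0 with hβ
  have hα' : ∀ j, α j = ζ j * (e j : ℕ → ℂ) 0 := by
    intro j; simp only [hα]; rw [heG]; rfl
  have hov : ∀ j k, ⟪f k, e j⟫_ℂ = conj (β k) * α j / ((ζ j ^ 2 - γ k ^ 2 : ℝ) : ℂ) := by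
    intro j k
    have h1 := inner_split (G (f k)) (G (e j)) (Gt (f k)) (Gt (e j)) (hsh _) (hsh _)
    rw [hsym, heG, map_smul, heG, ← hsymt, hfG, map_smul, hfG] at h1
    simp only [inner_smul_left, inner_smul_right, Complex.conj_ofReal] at h1
    rw [eq_div_iff (hD j k)]
    have h2 : conj (β k) * α j = conj ((G (f k) : ℕ → ℂ) 0) * ((ζ j : ℂ) • e j : L2) 0 := by
      simp only [hα, hβ]; rw [heG]
    rw [h2]
    push_cast
    linear_combination h1
  have hov' : ∀ j k, ⟪e j, f k⟫_ℂ = β k * conj (α j) / ((ζ j ^ 2 - γ k ^ 2 : ℝ) : ℂ) := by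
    intro j k
    rw [← inner_conj_symm, hov, map_div₀, map_mul, Complex.conj_conj, Complex.conj_ofReal]
  -- f in the span of e
  have hfe : ∀ k, f k = ∑ j, ⟪e j, f k⟫_ℂ • e j := by
    intro k
    set y := f k - ∑ j, ⟪e j, f k⟫_ℂ • e j with hy
    have h1 : ∀ j, ⟪e j, y⟫_ℂ = 0 := by
      intro j
      rw [hy, inner_sub_right, heo.inner_right_fintype, sub_self]
    have h2 : G y = 0 := by rw [hGe]; simp [h1]
    have h3 : Gt y = 0 := by
      ext n
      rw [hsh, h2]; rfl
    have h4 : ⟪f k, y⟫_ℂ = 0 := by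
      have := hsymt (f k) y
      rw [h3, inner_zero_right, hfG, inner_smul_left, Complex.conj_ofReal] at this
      exact (mul_eq_zero.1 this).resolve_left (hγ' k)
    have h5 : ⟪y, y⟫_ℂ = 0 := by
      conv_lhs => rw [hy]
      rw [inner_sub_left, ← hy, h4, sum_inner]
      simp [inner_smul_left, h1]
    exact sub_eq_zero.1 (inner_self_eq_zero.1 h5)
  have hβ0 : ∀ k, β k ≠ 0 := by
    intro k hk
    apply hfo.ne_zero k
    rw [hfe k]
    apply Finset.sum_eq_zero
    intro j _
    rw [hov', hk]; simp
  have hnα : ∀ j, α j * conj (α j) = ((‖α j‖ ^ 2 : ℝ) : ℂ) := by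
    intro j; rw [Complex.mul_conj, Complex.normSq_eq_norm_sq]
  have hnβ : ∀ j, β j * conj (β j) = ((‖β j‖ ^ 2 : ℝ) : ℂ) := by
    intro j; rw [Complex.mul_conj, Complex.normSq_eq_norm_sq]
  refine ⟨fun j => ‖α j‖ ^ 2, fun k => ‖β k‖ ^ 2, fun n j => conj (α j) * (e j : ℕ → ℂ) n,
    ?_, ?_, ?_, ?_, ?_⟩
  · intro k
    have h1 : β k = ∑ j, ⟪e j, f k⟫_ℂ * α j := by
      have := congrArg (fun z : L2 => (G z : ℕ → ℂ) 0) (hfe k)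
      simp only [map_sum, map_smul] at this
      rw [lp.coeFn_sum, Finset.sum_apply] at this
      exact this
    have h2 : β k * (∑ j, ((‖α j‖ ^ 2 / (ζ j ^ 2 - γ k ^ 2) : ℝ) : ℂ)) = β k * 1 := by
      rw [mul_one]
      conv_rhs => rw [h1]
      rw [Finset.mul_sum]
      apply Finset.sum_congr rfl
      intro j _
      rw [hov', Complex.ofReal_div, ← hnα]
      ring
    have h3 := mul_left_cancel₀ (hβ0 k) h2
    exact_mod_cast h3
  · intro k
    have h1 : ⟪f k, f k⟫_ℂ = 1 := by rw [orthonormal_iff_ite.1 hfo]; simp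
    conv_lhs at h1 => arg 3; rw [hfe k]
    rw [inner_sum] at h1
    have h2 : (((‖β k‖ ^ 2 * ∑ j, ‖α j‖ ^ 2 / (ζ j ^ 2 - γ k ^ 2) ^ 2 : ℝ)) : ℂ) = 1 := by
      rw [← h1, Complex.ofReal_mul, Complex.ofReal_sum, Finset.mul_sum]
      apply Finset.sum_congr rfl
      intro j _
      rw [inner_smul_right, hov, hov', Complex.ofReal_div, ← hnα, ← hnβ, Complex.ofReal_pow]
      ring
    exact_mod_cast h2
  · intro j
    simp only
    rw [eq_div_iff (hζ' j)]
    rw [← hnα]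
    conv_rhs => rw [hα' j]
    rw [hα' j]
    ring
  · intro n j
    have h1 : (ζ j : ℂ) * (e j : ℕ → ℂ) (n + 1) =
        ∑ k, ∑ i, (γ k : ℂ) * ⟪f k, e j⟫_ℂ * (⟪e i, f k⟫_ℂ * (e i : ℕ → ℂ) n) := by
      have h2 := hsh (e j) n
      rw [heG, hGf] at h2
      rw [lp.coeFn_sum, Finset.sum_apply] at h2
      have h3 : ((ζ j : ℂ) • e j : L2) (n + 1) = (ζ j : ℂ) * (e j : ℕ → ℂ) (n + 1) := rfl
      rw [← h3, ← h2]
      apply Finset.sum_congr rfl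
      intro k _
      rw [← Finset.mul_sum]
      have h4 : (((γ k : ℂ) * ⟪f k, e j⟫_ℂ) • f k : L2) n = (γ k : ℂ) * ⟪f k, e j⟫_ℂ * (f k : ℕ → ℂ) n := rfl
      rw [h4]
      congr 1
      conv_lhs => rw [hfe k]
      rw [lp.coeFn_sum, Finset.sum_apply]
      rfl
    have h5 : (e j : ℕ → ℂ) (n + 1) = (ζ j : ℂ)⁻¹ * ((ζ j : ℂ) * (e j : ℕ → ℂ) (n + 1)) := by
      rw [inv_mul_cancel_left₀ (hζ' j)]
    simp only
    rw [h5, h1]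
    simp only [Finset.mul_sum]
    apply Finset.sum_congr rfl
    intro k _
    apply Finset.sum_congr rfl
    intro i _
    rw [hov, hov', ← hnα, Complex.ofReal_mul (γ k), ← hnβ]
    have := hD j k
    have := hD i k
    field_simp
  · intro n
    have h1 : (G (lp.single 2 0 (1 : ℂ)) : ℕ → ℂ) n = (c n : ℂ) := by
      rw [hG, tsum_eq_single 0]
      · simp
      · intro b hb
        rw [lp.single_apply_ne _ _ _ hb, mul_zero]
    rw [← h1, hGe, lp.coeFn_sum, Finset.sum_apply]
    apply Finset.sum_congr rfl
    intro j _
    rw [lp.inner_single_right]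
    simp only
    rw [hα']
    have h4 : (((ζ j : ℂ) * ⟪(e j : ℕ → ℂ) 0, 1⟫_ℂ) • e j : L2) n
      = (ζ j : ℂ) * ⟪(e j : ℕ → ℂ) 0, 1⟫_ℂ * (e j : ℕ → ℂ) n := rfl
    refine h4.trans ?_
    simp

lemma solution_unique {N : ℕ} (ζ γ : Fin N → ℝ)
    (hζi : Function.Injective fun j => ζ j ^ 2) (hγi : Function.Injective fun j => γ j ^ 2)
    (hne : ∀ j k, ζ j ^ 2 ≠ γ k ^ 2)
    (w q w' q' : Fin N → ℝ) (g g' : ℕ → Fin N → ℂ)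
    (hw : ∀ k, ∑ j, w j / (ζ j ^ 2 - γ k ^ 2) = 1)
    (hq : ∀ k, q k * ∑ j, w j / (ζ j ^ 2 - γ k ^ 2) ^ 2 = 1)
    (hg0 : ∀ j, g 0 j = w j / ζ j)
    (hg : ∀ n j, g (n + 1) j = (w j / ζ j : ℂ) * ∑ k, ∑ i,
        ((γ k * q k : ℝ) : ℂ) / (((ζ j ^ 2 - γ k ^ 2 : ℝ) : ℂ) * ((ζ i ^ 2 - γ k ^ 2 : ℝ) : ℂ))
          * g n i)
    (hw' : ∀ k, ∑ j, w' j / (ζ j ^ 2 - γ k ^ 2) = 1)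
    (hq' : ∀ k, q' k * ∑ j, w' j / (ζ j ^ 2 - γ k ^ 2) ^ 2 = 1)
    (hg0' : ∀ j, g' 0 j = w' j / ζ j)
    (hg' : ∀ n j, g' (n + 1) j = (w' j / ζ j : ℂ) * ∑ k, ∑ i,
        ((γ k * q' k : ℝ) : ℂ) / (((ζ j ^ 2 - γ k ^ 2 : ℝ) : ℂ) * ((ζ i ^ 2 - γ k ^ 2 : ℝ) : ℂ))
          * g' n i) : g = g' := by
  have hww : w = w' := by
    have := cauchy_unique (fun j => ζ j ^ 2) (fun j => γ j ^ 2) (w - w') hζi hγi hne (by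
      intro k
      simp only [Pi.sub_apply, sub_div, Finset.sum_sub_distrib]
      rw [hw, hw', sub_self])
    exact sub_eq_zero.1 this
  subst hww
  have hqq : q = q' := by
    funext k
    have h1 := hq k
    have h2 := hq' k
    exact mul_right_cancel₀ (right_ne_zero_of_mul_eq_one h1) (h1.trans h2.symm)
  subst hqq
  funext n
  induction n with
  | zero => funext j; rw [hg0, hg0']
  | succ n ih => funext j; rw [hg, hg', ih]


open Matrix in
lemma eigen_lt_one {N : ℕ} (T : Matrix (Fin N) (Fin N) ℝ) (ζ u : Fin N → ℝ)
    (hu : ∀ j, u j ≠ 0) (hζ : Function.Injective ζ)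
    (hT1 : Tᵀ * T = 1 - vecMulVec u u) (hT2 : T * diagonal ζ = diagonal ζ * Tᵀ)
    (z : ℂ) (x : Fin N → ℂ) (hx : x ≠ 0) (hTx : (T.map Complex.ofReal) *ᵥ x = z • x) :
    ‖z‖ < 1 := by
  set Tc : Matrix (Fin N) (Fin N) ℂ := T.map Complex.ofReal with hTc
  set uc : Fin N → ℂ := fun j => (u j : ℂ) with huc
  have h1 : Tcᵀ * Tc = 1 - vecMulVec uc uc := by
    have := congrArg (fun M : Matrix (Fin N) (Fin N) ℝ => M.map Complex.ofRealHom) hT1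
    simp only [Matrix.map_mul] at this
    have h2 : (1 - vecMulVec u u).map Complex.ofRealHom = 1 - vecMulVec uc uc := by
      ext i j
      by_cases h : i = j <;> simp [vecMulVec_apply, huc, h]
    rw [h2] at this
    rw [← this]; rfl
  have h2 : Tc * diagonal (fun j => (ζ j : ℂ)) = diagonal (fun j => (ζ j : ℂ)) * Tcᵀ := by
    ext i j
    have := congrFun (congrFun hT2 i) j
    simp only [mul_diagonal, diagonal_mul, transpose_apply] at this ⊢
    simp only [hTc, map_apply]
    exact_mod_cast this
  have h1' : ∀ y, Tcᵀ *ᵥ (Tc *ᵥ y) = y - (uc ⬝ᵥ y) • uc := by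
    intro y
    rw [mulVec_mulVec, h1, sub_mulVec, one_mulVec, vecMulVec_mulVec]
    ext i; simp
  have h2' : ∀ y, Tc *ᵥ (fun j => (ζ j : ℂ) * y j) = fun j => (ζ j : ℂ) * (Tcᵀ *ᵥ y) j := by
    intro y
    have h3 : (fun j => (ζ j : ℂ) * y j) = diagonal (fun j => (ζ j : ℂ)) *ᵥ y := by
      ext i; simp [mulVec_diagonal]
    rw [h3, mulVec_mulVec, h2, ← mulVec_mulVec]
    ext i; simp [mulVec_diagonal]
  have hstar : ∀ y, Tc *ᵥ star y = star (Tc *ᵥ y) := by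
    intro y; ext i
    simp [mulVec, dotProduct, hTc]
  have hsq : ∀ y : Fin N → ℂ, star y ⬝ᵥ y = ((∑ i, ‖y i‖ ^ 2 : ℝ) : ℂ) := by
    intro y
    simp only [dotProduct, Pi.star_apply, Complex.ofReal_sum]
    apply Finset.sum_congr rfl
    intro i _
    rw [mul_comm]
    change y i * conj (y i) = _
    rw [Complex.mul_conj, Complex.normSq_eq_norm_sq]
  have hid : ∀ (z : ℂ) (y : Fin N → ℂ), Tc *ᵥ y = z • y →
      ‖z‖ ^ 2 * ∑ i, ‖y i‖ ^ 2 = ∑ i, ‖y i‖ ^ 2 - ‖uc ⬝ᵥ y‖ ^ 2 := by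
    intro z y hy
    have e1 : star y ⬝ᵥ (Tcᵀ *ᵥ (Tc *ᵥ y)) = star (Tc *ᵥ y) ⬝ᵥ (Tc *ᵥ y) := by
      rw [dotProduct_mulVec, vecMul_transpose, hstar]
    rw [h1', hsq, hy, dotProduct_sub, hsq, dotProduct_smul] at e1
    have e2 : star y ⬝ᵥ uc = conj (uc ⬝ᵥ y) := by
      simp [dotProduct, huc, mul_comm]
    rw [e2, smul_eq_mul, Complex.mul_conj, Complex.normSq_eq_norm_sq] at e1
    have e3 : (∑ i, ‖y i‖ ^ 2 - ‖uc ⬝ᵥ y‖ ^ 2 : ℝ) = ∑ i, ‖(z • y) i‖ ^ 2 := by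
      exact_mod_cast e1
    rw [e3, Finset.mul_sum]
    apply Finset.sum_congr rfl
    intro i _
    simp [mul_pow]
  have hpos : 0 < ∑ i, ‖x i‖ ^ 2 := by
    obtain ⟨i, hi⟩ := Function.ne_iff.1 hx
    apply Finset.sum_pos' (fun i _ => by positivity)
    exact ⟨i, Finset.mem_univ i, by have := norm_pos_iff.2 hi; positivity⟩
  have hle : ‖z‖ ≤ 1 := by
    have := hid z x hTx
    by_contra hcon
    push Not at hcon
    have h3 : 1 < ‖z‖ ^ 2 := by nlinarith
    nlinarith [sq_nonneg ‖uc ⬝ᵥ x‖]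
  refine lt_of_le_of_ne hle ?_
  intro hz1
  have hstep : ∀ (z : ℂ) (y : Fin N → ℂ), ‖z‖ = 1 → Tc *ᵥ y = z • y →
      uc ⬝ᵥ y = 0 ∧ Tc *ᵥ (fun j => (ζ j : ℂ) * y j) = z⁻¹ • (fun j => (ζ j : ℂ) * y j) := by
    intro z y hz hy
    have h3 := hid z y hy
    rw [hz] at h3
    have h4 : uc ⬝ᵥ y = 0 := by
      have : ‖uc ⬝ᵥ y‖ ^ 2 = 0 := by linarith
      simpa using this
    refine ⟨h4, ?_⟩
    have h5 := h1' y
    rw [hy, h4, zero_smul, sub_zero, mulVec_smul] at h5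
    have hz0 : z ≠ 0 := by intro h; simp [h] at hz
    have h6 : Tcᵀ *ᵥ y = z⁻¹ • y := by
      conv_rhs => rw [← h5]
      rw [smul_smul, inv_mul_cancel₀ hz0, one_smul]
    rw [h2', h6]
    ext j; simp; ring
  have hall : ∀ m : ℕ, ∃ z' : ℂ, ‖z'‖ = 1 ∧
      Tc *ᵥ (fun j => (ζ j : ℂ) ^ m * x j) = z' • (fun j => (ζ j : ℂ) ^ m * x j) := by
    intro m
    induction m with
    | zero => exact ⟨z, hz1, by simpa using hTx⟩
    | succ m ih =>
      obtain ⟨z', hz', h⟩ := ih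
      refine ⟨z'⁻¹, by simp [hz'], ?_⟩
      have := (hstep z' _ hz' h).2
      have e : (fun j => (ζ j : ℂ) ^ (m + 1) * x j) = (fun j => (ζ j : ℂ) * ((ζ j : ℂ) ^ m * x j)) := by
        ext j; ring
      rw [e]; exact this
  have hzero : (fun j => uc j * x j) = 0 := by
    apply Matrix.eq_zero_of_forall_pow_sum_mul_pow_eq_zero (f := fun j => (ζ j : ℂ))
    · intro a b hab
      exact hζ (Complex.ofReal_injective hab)
    · intro m
      obtain ⟨z', hz', h⟩ := hall m
      have := (hstep z' _ hz' h).1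
      rw [← this]
      simp only [dotProduct]
      apply Finset.sum_congr rfl
      intro j _
      ring
  apply hx
  ext j
  have := congrFun hzero j
  simp only [Pi.zero_apply, mul_eq_zero] at this
  exact this.resolve_left (by simp only [huc]; exact_mod_cast hu j)

attribute [local instance] Matrix.linftyOpNormedRing Matrix.linftyOpNormedAlgebra in
open Matrix in
lemma decay {N : ℕ} (hN : 1 ≤ N) (T : Matrix (Fin N) (Fin N) ℝ)
    (hT : ∀ (z : ℂ) (x : Fin N → ℂ), x ≠ 0 → (T.map Complex.ofReal) *ᵥ x = z • x → ‖z‖ < 1) :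
    ∃ C r : ℝ, 0 ≤ C ∧ 0 < r ∧ r < 1 ∧ ∀ n i j, |(T ^ n) i j| ≤ C * r ^ n := by
  have : Nonempty (Fin N) := ⟨⟨0, hN⟩⟩
  have : CompleteSpace (Matrix (Fin N) (Fin N) ℂ) := FiniteDimensional.complete ℂ _
  set Tc : Matrix (Fin N) (Fin N) ℂ := T.map Complex.ofReal with hTc
  have hsr : spectralRadius ℂ Tc < 1 := by
    obtain ⟨z, hz, hz'⟩ := spectrum.exists_nnnorm_eq_spectralRadius Tc
    rw [← hz']
    have h1 : (algebraMap ℂ (Matrix (Fin N) (Fin N) ℂ) z - Tc).det = 0 := by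
      by_contra hcon
      exact hz ((Matrix.isUnit_iff_isUnit_det _).2 (isUnit_iff_ne_zero.2 hcon))
    obtain ⟨x, hx, hx'⟩ := Matrix.exists_mulVec_eq_zero_iff.2 h1
    have h2 : Tc *ᵥ x = z • x := by
      rw [sub_mulVec, sub_eq_zero] at hx'
      rw [← hx', Algebra.algebraMap_eq_smul_one, smul_mulVec, one_mulVec]
    have := hT z x hx h2
    exact_mod_cast this
  obtain ⟨r, hr1, hr2⟩ := ENNReal.lt_iff_exists_nnreal_btwn.1 hsr
  have hr2' : (r : ℝ) < 1 := by exact_mod_cast hr2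
  have hr0 : (0 : ℝ) < r := by
    have : (0 : ℝ≥0∞) < r := lt_of_le_of_lt (zero_le) hr1
    exact_mod_cast this
  have hg := spectrum.pow_nnnorm_pow_one_div_tendsto_nhds_spectralRadius Tc
  have hev := hg.eventually (gt_mem_nhds hr1)
  obtain ⟨n0, hn0⟩ := Filter.eventually_atTop.1 hev
  have hbig : ∀ n, n0 ≤ n → 1 ≤ n → ‖Tc ^ n‖ ≤ (r : ℝ) ^ n := by
    intro n hn h1n
    have h := hn0 n hn
    have h2 : (‖Tc ^ n‖₊ : ℝ≥0∞) ≤ (r : ℝ≥0∞) ^ n := by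
      have h3 := ENNReal.rpow_le_rpow h.le (show (0 : ℝ) ≤ n by positivity)
      rw [← ENNReal.rpow_mul, one_div, inv_mul_cancel₀ (by positivity), ENNReal.rpow_one,
        ENNReal.rpow_natCast] at h3
      exact h3
    exact_mod_cast h2
  have hent : ∀ (M : Matrix (Fin N) (Fin N) ℂ) i j, ‖M i j‖ ≤ ‖M‖ := by
    intro M i j
    rw [Matrix.linfty_opNorm_def]
    have h1 : ‖M i j‖₊ ≤ ∑ j, ‖M i j‖₊ :=
      Finset.single_le_sum (f := fun j => ‖M i j‖₊) (fun _ _ => zero_le) (Finset.mem_univ j)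
    have h2 := Finset.le_sup (f := fun i => ∑ j, ‖M i j‖₊) (Finset.mem_univ i)
    exact_mod_cast h1.trans h2
  have hpow : ∀ n, Tc ^ n = (T ^ n).map Complex.ofReal := by
    intro n
    exact (Matrix.map_pow (f := Complex.ofRealHom) T n).symm
  set C : ℝ := 1 + ∑ n ∈ Finset.range (n0 + 1), ‖Tc ^ n‖ / (r : ℝ) ^ n with hC
  have hsum : 0 ≤ ∑ n ∈ Finset.range (n0 + 1), ‖Tc ^ n‖ / (r : ℝ) ^ n :=
    Finset.sum_nonneg (fun n _ => by positivity)
  refine ⟨C, r, by linarith, hr0, hr2', ?_⟩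
  intro n i j
  have h1 : |(T ^ n) i j| ≤ ‖Tc ^ n‖ := by
    have := hent (Tc ^ n) i j
    rw [hpow] at this ⊢
    simpa using this
  refine h1.trans ?_
  rcases Nat.lt_or_ge n0 n with h | h
  · have h2 := hbig n h.le (by omega)
    have h3 : (0 : ℝ) < (r : ℝ) ^ n := by positivity
    nlinarith
  · have h2 : ‖Tc ^ n‖ / (r : ℝ) ^ n ≤ ∑ n ∈ Finset.range (n0 + 1), ‖Tc ^ n‖ / (r : ℝ) ^ n :=
      Finset.single_le_sum (f := fun n => ‖Tc ^ n‖ / (r : ℝ) ^ n) (fun n _ => by positivity)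
        (Finset.mem_range.2 (by omega))
    have h3 : (0 : ℝ) < (r : ℝ) ^ n := by positivity
    have h4 : ‖Tc ^ n‖ / (r : ℝ) ^ n ≤ C := by linarith
    rwa [div_le_iff₀ h3] at h4

open Matrix in
lemma exists_matrix {N : ℕ} (ζ γ : Fin N → ℝ) (hζ : ∀ j, ζ j ≠ 0)
    (hζi : Function.Injective fun j => ζ j ^ 2) (hγi : Function.Injective fun j => γ j ^ 2)
    (hxy : ∀ j, γ j ^ 2 < ζ j ^ 2) (hlt : ∀ j k, j < k → ζ k ^ 2 < γ j ^ 2)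
    (hne : ∀ j k, ζ j ^ 2 ≠ γ k ^ 2) :
    ∃ (T F : Matrix (Fin N) (Fin N) ℝ) (u : Fin N → ℝ), (∀ j, u j ≠ 0) ∧ F * Fᵀ = 1 ∧
      Tᵀ * T = 1 - vecMulVec u u ∧ T * diagonal ζ = diagonal ζ * Tᵀ ∧
      T * diagonal ζ = Fᵀ * diagonal γ * F := by
  have hex := cauchy_exists (fun j => ζ j ^ 2) (fun j => γ j ^ 2) hζi hne
  have hwp := weight_pos (fun j => ζ j ^ 2) (fun j => γ j ^ 2) hxy hlt
  set w : Fin N → ℝ := fun j => Lagrange.nodalWeight Finset.univ (fun j => ζ j ^ 2) j *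
    Polynomial.eval (ζ j ^ 2) (Lagrange.nodal Finset.univ (fun j => γ j ^ 2)) with hw
  have hex' : ∀ k, ∑ j, w j / (ζ j ^ 2 - γ k ^ 2) = 1 := hex
  have hwp' : ∀ j, 0 < w j := hwp
  clear_value w
  have hD : ∀ j k, ζ j ^ 2 - γ k ^ 2 ≠ 0 := fun j k => sub_ne_zero.2 (hne j k)
  set s : Fin N → ℝ := fun k => ∑ j, w j / (ζ j ^ 2 - γ k ^ 2) ^ 2 with hs
  have hsp : ∀ k, 0 < s k := by
    intro k
    apply Finset.sum_pos
    · intro j _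
      have := hwp' j
      have := hD j k
      positivity
    · exact ⟨k, Finset.mem_univ k⟩
  set a : Fin N → ℝ := fun j => √(w j) with ha
  have haa : ∀ j, a j * a j = w j := fun j => Real.mul_self_sqrt (hwp' j).le
  have ha0 : ∀ j, a j ≠ 0 := fun j => (Real.sqrt_pos.2 (hwp' j)).ne'
  set b : Fin N → ℝ := fun k => √(s k)⁻¹ with hb
  have hbb : ∀ k, b k * b k = (s k)⁻¹ := fun k => Real.mul_self_sqrt (inv_pos.2 (hsp k)).le
  set F : Matrix (Fin N) (Fin N) ℝ := Matrix.of fun k j => b k * a j / (ζ j ^ 2 - γ k ^ 2) with hF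
  have hFF : F * Fᵀ = 1 := by
    ext k l
    rw [Matrix.mul_apply, Matrix.one_apply]
    simp only [hF, transpose_apply, of_apply]
    split_ifs with h
    · subst h
      have h1 : ∀ j, b k * a j / (ζ j ^ 2 - γ k ^ 2) * (b k * a j / (ζ j ^ 2 - γ k ^ 2)) =
          (s k)⁻¹ * (w j / (ζ j ^ 2 - γ k ^ 2) ^ 2) := by
        intro j
        rw [← haa, ← hbb, div_mul_div_comm]; ring
      simp only [h1]
      rw [← Finset.mul_sum]
      exact inv_mul_cancel₀ (hsp k).ne'
    · have hkl : γ k ^ 2 - γ l ^ 2 ≠ 0 := sub_ne_zero.2 (fun h' => h (hγi h'))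
      have h1 : ∀ j, b k * a j / (ζ j ^ 2 - γ k ^ 2) * (b l * a j / (ζ j ^ 2 - γ l ^ 2)) =
          b k * b l / (γ k ^ 2 - γ l ^ 2) *
            (w j / (ζ j ^ 2 - γ k ^ 2) - w j / (ζ j ^ 2 - γ l ^ 2)) := by
        intro j
        rw [← haa]
        have := hD j k
        have := hD j l
        field_simp
        ring
      simp only [h1]
      rw [← Finset.mul_sum, Finset.sum_sub_distrib, hex', hex', sub_self, mul_zero]
  have hFF' : Fᵀ * F = 1 := mul_eq_one_comm.1 hFF
  set B := Fᵀ * diagonal γ * F with hB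
  have hBt : Bᵀ = B := by
    rw [hB, transpose_mul, transpose_mul, transpose_transpose, diagonal_transpose, Matrix.mul_assoc]
  have hcomm : diagonal (fun k => γ k ^ 2) * F = F * diagonal (fun j => ζ j ^ 2) - vecMulVec b a := by
    ext k j
    simp only [diagonal_mul, mul_diagonal, Matrix.sub_apply, vecMulVec_apply, hF, of_apply]
    have := hD j k
    field_simp
    ring
  have hFb : Fᵀ * vecMulVec b a = vecMulVec a a := by
    have hFa : F *ᵥ a = b := by
      ext k
      have h1 : ∀ j, b k * a j / (ζ j ^ 2 - γ k ^ 2) * a j = b k * (w j / (ζ j ^ 2 - γ k ^ 2)) := by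
        intro j; rw [← haa]; ring
      simp only [mulVec, dotProduct, hF, of_apply, h1]
      rw [← Finset.mul_sum, hex', mul_one]
    have : Fᵀ *ᵥ b = a := by rw [← hFa, mulVec_mulVec, hFF', one_mulVec]
    rw [mul_vecMulVec, this]
  have hBB : B * B = diagonal (fun j => ζ j ^ 2) - vecMulVec a a := by
    have h1 : B * B = Fᵀ * (diagonal (fun k => γ k ^ 2) * F) := by
      rw [hB]
      calc Fᵀ * diagonal γ * F * (Fᵀ * diagonal γ * F)
          = Fᵀ * diagonal γ * (F * Fᵀ) * diagonal γ * F := by simp only [Matrix.mul_assoc]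
        _ = Fᵀ * (diagonal γ * diagonal γ) * F := by rw [hFF]; simp only [Matrix.mul_assoc, Matrix.one_mul]
        _ = _ := by
          rw [diagonal_mul_diagonal, Matrix.mul_assoc]
          simp only [sq]
    rw [h1, hcomm, Matrix.mul_sub, ← Matrix.mul_assoc, hFF', Matrix.one_mul, hFb]
  have hinv : diagonal (fun j => (ζ j)⁻¹) * diagonal ζ = 1 := by
    rw [diagonal_mul_diagonal]
    simp [hζ]
  have hinv' : diagonal ζ * diagonal (fun j => (ζ j)⁻¹) = 1 := mul_eq_one_comm.1 hinv
  refine ⟨B * diagonal (fun j => (ζ j)⁻¹), F, fun j => a j / ζ j,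
    fun j => div_ne_zero (ha0 j) (hζ j), hFF, ?_, ?_, ?_⟩
  · rw [transpose_mul, diagonal_transpose, hBt]
    calc diagonal (fun j => (ζ j)⁻¹) * B * (B * diagonal (fun j => (ζ j)⁻¹))
        = diagonal (fun j => (ζ j)⁻¹) * (B * B) * diagonal (fun j => (ζ j)⁻¹) := by
          simp only [Matrix.mul_assoc]
      _ = _ := by
        rw [hBB]
        ext i j
        have := hζ i
        have := hζ j
        simp only [mul_diagonal, diagonal_mul, Matrix.sub_apply, vecMulVec_apply, diagonal_apply, one_apply]
        split_ifs with h
        · subst h; field_simp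
        · field_simp
          ring
  · rw [transpose_mul, diagonal_transpose, hBt, Matrix.mul_assoc, hinv, Matrix.mul_one,
      ← Matrix.mul_assoc, hinv', Matrix.one_mul]
  · rw [Matrix.mul_assoc, hinv, Matrix.mul_one]


lemma summable_of_geom {f : ℕ → ℝ} {C r : ℝ} (hr0 : 0 < r) (hr1 : r < 1)
    (hf : ∀ n, |f n| ≤ C * r ^ n) :
    Memℓp (fun n => (f n : ℂ)) 2 ∧ Summable (fun n : ℕ => (n : ℝ) * ‖(f n : ℂ)‖ ^ 2) := by
  have hsq : ∀ n, ‖(f n : ℂ)‖ ^ 2 ≤ C ^ 2 * (r ^ 2) ^ n := by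
    intro n
    rw [Complex.norm_real, Real.norm_eq_abs]
    calc |f n| ^ 2 ≤ (C * r ^ n) ^ 2 := pow_le_pow_left₀ (abs_nonneg _) (hf n) 2
      _ = _ := by ring
  have hr2 : r ^ 2 < 1 := by nlinarith
  constructor
  · apply memℓp_gen
    have : ∀ n, ‖(f n : ℂ)‖ ^ (2 : ℝ≥0∞).toReal = ‖(f n : ℂ)‖ ^ 2 := by
      intro n; simp
    simp only [this]
    exact Summable.of_nonneg_of_le (fun n => by positivity) hsq
      ((summable_geometric_of_lt_one (by positivity) hr2).mul_left _)
  · have hs : Summable (fun n : ℕ => C ^ 2 * ((n : ℝ) ^ 1 * (r ^ 2) ^ n)) :=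
      (summable_pow_mul_geometric_of_norm_lt_one (R := ℝ) (r := r ^ 2) 1
        (by rw [Real.norm_eq_abs, abs_of_nonneg (by positivity)]; exact hr2)).mul_left _
    refine Summable.of_nonneg_of_le (fun n => by positivity) (fun n => ?_) hs
    have := mul_le_mul_of_nonneg_left (hsq n) (show (0 : ℝ) ≤ n by positivity)
    linarith

/-- Finite rank Hankel-type kernel. -/
lemma hankel_of_kernel {N : ℕ} (l : Fin N → ℝ) (v : Fin N → L2) (vr : Fin N → ℕ → ℝ)
    (hvr : ∀ j n, (v j : ℕ → ℂ) n = (vr j n : ℂ)) (c : ℕ → ℂ)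
    (hc : ∀ n p, c (n + p) = ((∑ j, l j * vr j n * vr j p : ℝ) : ℂ)) :
    ∃ K : L2 →L[ℂ] L2, (∀ x, K x = ∑ j, ((l j : ℂ) * ⟪v j, x⟫_ℂ) • v j) ∧ IsHankelOp c K := by
  have h1 : ∀ x, (∑ j, (innerSL ℂ (v j)).smulRight ((l j : ℂ) • v j)) x
        = ∑ j, ((l j : ℂ) * ⟪v j, x⟫_ℂ) • v j := by
    intro x
    rw [_root_.sum_apply]
    apply Finset.sum_congr rfl
    intro j _
    rw [ContinuousLinearMap.smulRight_apply, innerSL_apply_apply, smul_smul, mul_comm]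
  refine ⟨∑ j, (innerSL ℂ (v j)).smulRight ((l j : ℂ) • v j), h1, ?_⟩
  · intro x n
    rw [h1, lp.coeFn_sum, Finset.sum_apply]
    have h2 : HasSum (fun p => ∑ j, (l j : ℂ) * (vr j n : ℂ) * ⟪(v j : ℕ → ℂ) p, (x : ℕ → ℂ) p⟫_ℂ)
        (∑ j, (l j : ℂ) * (vr j n : ℂ) * ⟪v j, x⟫_ℂ) :=
      hasSum_sum (fun j _ => (lp.hasSum_inner (𝕜 := ℂ) (v j) x).mul_left _)
    have h3 : ∀ p, c (n + p) * (x : ℕ → ℂ) p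
        = ∑ j, (l j : ℂ) * (vr j n : ℂ) * ⟪(v j : ℕ → ℂ) p, (x : ℕ → ℂ) p⟫_ℂ := by
      intro p
      rw [hc, Complex.ofReal_sum, Finset.sum_mul]
      apply Finset.sum_congr rfl
      intro j _
      rw [hvr]
      simp
      ring
    simp only [h3]
    rw [h2.tsum_eq]
    apply Finset.sum_congr rfl
    intro j _
    have h4 : (((l j : ℂ) * ⟪v j, x⟫_ℂ) • v j : L2) n = (l j : ℂ) * ⟪v j, x⟫_ℂ * (v j : ℕ → ℂ) n := rfl
    rw [h4, hvr]
    ring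

open Matrix in
lemma solution_exists {N : ℕ} (ζ γ : Fin N → ℝ) (hζ : ∀ j, ζ j ≠ 0) (hγ : ∀ j, γ j ≠ 0)
    (T F : Matrix (Fin N) (Fin N) ℝ) (u : Fin N → ℝ) (hFF : F * Fᵀ = 1)
    (hT1 : Tᵀ * T = 1 - vecMulVec u u) (hT2 : T * diagonal ζ = diagonal ζ * Tᵀ)
    (hT3 : T * diagonal ζ = Fᵀ * diagonal γ * F)
    (C r : ℝ) (hr0 : 0 < r) (hr1 : r < 1) (hdec : ∀ n i j, |(T ^ n) i j| ≤ C * r ^ n) :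
    ∃ c : ℕ → ℝ, InH12 (fun n => (c n : ℂ)) ∧
      ∃ Γ Γt : L2 →L[ℂ] L2,
        IsHankelOp (fun n => (c n : ℂ)) Γ ∧
        IsHankelOp (shiftSeq fun n => (c n : ℂ)) Γt ∧
        LinearMap.rank Γ.toLinearMap = N ∧
        {z : ℂ | z ≠ 0 ∧ Module.End.HasEigenvalue Γ.toLinearMap z}
          = Set.range (fun j : Fin N => (ζ j : ℂ)) ∧
        LinearMap.rank Γt.toLinearMap = N ∧
        {z : ℂ | z ≠ 0 ∧ Module.End.HasEigenvalue Γt.toLinearMap z}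
          = Set.range (fun j : Fin N => (γ j : ℂ)) := by
  have hFF' : Fᵀ * F = 1 := mul_eq_one_comm.1 hFF
  -- observability vectors
  set o : Fin N → ℕ → ℝ := fun j n => (u ᵥ* T ^ n) j with ho
  have hob : ∀ j n, |o j n| ≤ ((∑ i, |u i|) * C) * r ^ n := by
    intro j n
    simp only [ho, vecMul, dotProduct]
    refine (Finset.abs_sum_le_sum_abs _ _).trans ?_
    rw [mul_assoc, Finset.sum_mul]
    apply Finset.sum_le_sum
    intro i _
    rw [abs_mul]
    exact mul_le_mul_of_nonneg_left (hdec n i j) (abs_nonneg _)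
  set v : Fin N → L2 := fun j => ⟨fun n => (o j n : ℂ), (summable_of_geom hr0 hr1 (hob j)).1⟩ with hv
  have hvo : ∀ j n, (v j : ℕ → ℂ) n = (o j n : ℂ) := fun j n => rfl
  have hgram : ∀ M : ℕ, ∀ i j, ∑ n ∈ Finset.range M, o i n * o j n
      = (1 - (T ^ M)ᵀ * T ^ M : Matrix (Fin N) (Fin N) ℝ) i j := by
    intro M i j
    induction M with
    | zero => simp
    | succ M ih =>
      rw [Finset.sum_range_succ, ih]
      have h1 : (T ^ (M + 1))ᵀ * T ^ (M + 1) = (T ^ M)ᵀ * T ^ M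
          - vecMulVec (u ᵥ* T ^ M) (u ᵥ* T ^ M) := by
        rw [pow_succ', transpose_mul, Matrix.mul_assoc, ← Matrix.mul_assoc Tᵀ, hT1, Matrix.sub_mul,
          Matrix.one_mul, Matrix.mul_sub, vecMulVec_mul, mul_vecMulVec, mulVec_transpose]
      rw [h1]
      simp only [Matrix.sub_apply, vecMulVec_apply, ho]
      ring
  have hlim : ∀ i j, Filter.Tendsto (fun M => ((T ^ M)ᵀ * T ^ M : Matrix (Fin N) (Fin N) ℝ) i j)
      Filter.atTop (nhds 0) := by
    intro i j
    have hent : ∀ i j, Filter.Tendsto (fun M => (T ^ M) i j) Filter.atTop (nhds 0) := by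
      intro i j
      apply squeeze_zero_norm (fun n => hdec n i j)
      simpa using (tendsto_pow_atTop_nhds_zero_of_lt_one hr0.le hr1).const_mul C
    simp only [Matrix.mul_apply, transpose_apply]
    have := tendsto_finsetSum (Finset.univ : Finset (Fin N))
      (fun k _ => (hent k i).mul (hent k j))
    simpa using this
  have hinner : ∀ i j, ⟪v i, v j⟫_ℂ = if i = j then 1 else 0 := by
    intro i j
    have h1 := (lp.hasSum_inner (𝕜 := ℂ) (v i) (v j)).tendsto_sum_nat
    have h2 : Filter.Tendsto (fun M => (((1 - (T ^ M)ᵀ * T ^ M : Matrix (Fin N) (Fin N) ℝ) i j : ℝ) : ℂ))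
        Filter.atTop (nhds (((1 : Matrix (Fin N) (Fin N) ℝ) i j - 0 : ℝ) : ℂ)) := by
      apply (Complex.continuous_ofReal.tendsto _).comp
      simp only [Matrix.sub_apply]
      exact tendsto_const_nhds.sub (hlim i j)
    have h3 : (fun M => ∑ n ∈ Finset.range M, ⟪(v i : ℕ → ℂ) n, (v j : ℕ → ℂ) n⟫_ℂ)
        = (fun M => (((1 - (T ^ M)ᵀ * T ^ M : Matrix (Fin N) (Fin N) ℝ) i j : ℝ) : ℂ)) := by
      funext M
      rw [← hgram, Complex.ofReal_sum]
      apply Finset.sum_congr rfl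
      intro n _
      rw [hvo, hvo]
      simp [mul_comm]
    have h4 := tendsto_nhds_unique (h3 ▸ h1) h2
    rw [h4, Matrix.one_apply]
    split_ifs <;> simp
  have hvon : Orthonormal ℂ v := orthonormal_iff_ite.2 hinner
  -- second family
  set p : Fin N → ℕ → ℝ := fun k n => ∑ j, F k j * o j n with hp
  set f : Fin N → L2 := fun k => ∑ j, (F k j : ℂ) • v j with hf
  have hfp : ∀ k n, (f k : ℕ → ℂ) n = (p k n : ℂ) := by
    intro k n
    simp only [hf, hp]
    rw [lp.coeFn_sum, Finset.sum_apply, Complex.ofReal_sum]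
    apply Finset.sum_congr rfl
    intro j _
    rw [Complex.ofReal_mul]
    rfl
  have hfon : Orthonormal ℂ f := by
    rw [orthonormal_iff_ite]
    intro k l
    simp only [hf]
    rw [hvon.inner_sum]
    have := congrFun (congrFun hFF k) l
    rw [Matrix.mul_apply, Matrix.one_apply] at this
    simp only [transpose_apply] at this
    simp only [Complex.conj_ofReal]
    have h2 := congrArg Complex.ofReal this
    rw [Complex.ofReal_sum] at h2
    simp only [Complex.ofReal_mul] at h2
    rw [h2]
    split_ifs <;> simp
  -- the symbol
  set c : ℕ → ℝ := fun n => (u ᵥ* T ^ n) ⬝ᵥ (diagonal ζ *ᵥ u) with hc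
  have hTp : ∀ p, T ^ p * diagonal ζ = diagonal ζ * (T ^ p)ᵀ := by
    intro p
    induction p with
    | zero => simp
    | succ p ih =>
      rw [pow_succ, Matrix.mul_assoc, hT2, ← Matrix.mul_assoc, ih, Matrix.mul_assoc,
        ← transpose_mul, ← pow_succ', pow_succ]
  have hcc : ∀ (n p : ℕ), c (n + p) = (u ᵥ* T ^ n) ⬝ᵥ (diagonal ζ *ᵥ (u ᵥ* T ^ p)) := by
    intro n p
    simp only [hc]
    rw [pow_add, ← vecMul_vecMul, ← dotProduct_mulVec, mulVec_mulVec, hTp, ← mulVec_mulVec,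
      mulVec_transpose]
  have hk1 : ∀ n p, ((c (n + p) : ℝ) : ℂ) = ((∑ j, ζ j * o j n * o j p : ℝ) : ℂ) := by
    intro n p
    rw [hcc]
    congr 1
    simp only [dotProduct, mulVec_diagonal, ho]
    apply Finset.sum_congr rfl
    intro j _
    ring
  have hk2 : ∀ n m, shiftSeq (fun n => (c n : ℂ)) (n + m) = ((∑ k, γ k * p k n * p k m : ℝ) : ℂ) := by
    intro n m
    simp only [shiftSeq]
    rw [show n + m + 1 = (n + 1) + m by ring, hcc]
    congr 1
    rw [pow_succ, ← vecMul_vecMul, ← dotProduct_mulVec, mulVec_mulVec, hT3, ← mulVec_mulVec,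
      ← mulVec_mulVec, dotProduct_mulVec, vecMul_transpose]
    have hpv : ∀ n k, (F *ᵥ (u ᵥ* T ^ n)) k = p k n := fun n k => rfl
    simp only [dotProduct, mulVec_diagonal]
    apply Finset.sum_congr rfl
    intro k _
    rw [hpv, hpv]
    ring
  obtain ⟨Γ, hΓ, hΓh⟩ := hankel_of_kernel ζ v o hvo (fun n => (c n : ℂ)) hk1
  obtain ⟨Γt, hΓt, hΓth⟩ := hankel_of_kernel γ f p hfp _ hk2
  have hd := diag_op v hvon ζ hζ Γ hΓ
  have hdt := diag_op f hfon γ hγ Γt hΓt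
  refine ⟨c, ?_, Γ, Γt, hΓh, hΓth, hd.1, hd.2, hdt.1, hdt.2⟩
  apply summable_of_geom (C := ∑ j, ((∑ i, |u i|) * C) * |ζ j * u j|) hr0 hr1
  intro n
  simp only [hc, dotProduct, mulVec_diagonal]
  refine (Finset.abs_sum_le_sum_abs _ _).trans ?_
  rw [Finset.sum_mul]
  apply Finset.sum_le_sum
  intro j _
  rw [abs_mul]
  have := mul_le_mul_of_nonneg_right (hob j n) (abs_nonneg (ζ j * u j))
  simp only [ho] at this
  linarith

end HankelAux

/-- There exists a unique real sequence `c ∈ h^{1/2}` such that the (self-adjoint) Hankel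
operator `Γ_c` has rank `N` with nonzero eigenvalues exactly `ζ_1, …, ζ_N` and the shifted
Hankel operator `Γ̃_c` has rank `N` with nonzero eigenvalues exactly `γ_1, …, γ_N`. -/
theorem statement0 (N : ℕ) (hN : 1 ≤ N) (ζ γ : Fin N → ℝ)
    (h1 : ∀ j : Fin N, |γ j| < |ζ j|)
    (h2 : ∀ j k : Fin N, (j : ℕ) + 1 = (k : ℕ) → |ζ k| < |γ j|)
    (h3 : ∀ j : Fin N, 0 < |γ j|) :
    ∃! c : ℕ → ℝ,
      InH12 (fun n => (c n : ℂ)) ∧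
      ∃ Γ Γt : L2 →L[ℂ] L2,
        IsHankelOp (fun n => (c n : ℂ)) Γ ∧
        IsHankelOp (shiftSeq fun n => (c n : ℂ)) Γt ∧
        LinearMap.rank Γ.toLinearMap = N ∧
        {z : ℂ | z ≠ 0 ∧ Module.End.HasEigenvalue Γ.toLinearMap z}
          = Set.range (fun j : Fin N => (ζ j : ℂ)) ∧
        LinearMap.rank Γt.toLinearMap = N ∧
        {z : ℂ | z ≠ 0 ∧ Module.End.HasEigenvalue Γt.toLinearMap z}
          = Set.range (fun j : Fin N => (γ j : ℂ)) := by
  have hsq1 : ∀ j, γ j ^ 2 < ζ j ^ 2 := fun j => sq_lt_sq.2 (h1 j)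
  have hmono : ∀ (d : ℕ) (j k : Fin N), (j : ℕ) + 1 + d = (k : ℕ) → |ζ k| < |γ j| := by
    intro d
    induction d with
    | zero => intro j k h; exact h2 j k (by omega)
    | succ d ih =>
      intro j k h
      have hk' : (k : ℕ) - 1 < N := by omega
      have a1 := ih j ⟨(k : ℕ) - 1, hk'⟩ (by simp only; omega)
      have a2 := h2 ⟨(k : ℕ) - 1, hk'⟩ k (by simp only; omega)
      exact (a2.trans (h1 _)).trans a1
  have hlt : ∀ j k : Fin N, j < k → ζ k ^ 2 < γ j ^ 2 := by
    intro j k hjk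
    have hjk' : (j : ℕ) < (k : ℕ) := hjk
    exact sq_lt_sq.2 (hmono ((k : ℕ) - (j : ℕ) - 1) j k (by omega))
  have hγ : ∀ j, γ j ≠ 0 := fun j => abs_pos.1 (h3 j)
  have hζ : ∀ j, ζ j ≠ 0 := fun j => abs_pos.1 ((h3 j).trans (h1 j))
  have hζs : Function.Injective fun j => ζ j ^ 2 := by
    intro j k h
    simp only at h
    rcases lt_trichotomy j k with h' | h' | h'
    · have := hlt j k h'; have := hsq1 j; linarith
    · exact h'
    · have := hlt k j h'; have := hsq1 k; linarith
  have hγs : Function.Injective fun j => γ j ^ 2 := by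
    intro j k h
    simp only at h
    rcases lt_trichotomy j k with h' | h' | h'
    · have := hlt j k h'; have := hsq1 k; linarith
    · exact h'
    · have := hlt k j h'; have := hsq1 j; linarith
  have hζi : Function.Injective ζ := fun j k h => hζs (by simp only [h])
  have hγi : Function.Injective γ := fun j k h => hγs (by simp only [h])
  have hne : ∀ j k, ζ j ^ 2 ≠ γ k ^ 2 := by
    intro j k h
    rcases lt_trichotomy j k with h' | h' | h'
    · have := hlt j k h'; have := hsq1 k; have := hsq1 j; linarith
    · subst h'; exact (hsq1 j).ne h.symm
    · have := hlt k j h'; linarith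
  obtain ⟨T, F, u, hu, hFF, hT1, hT2, hT3⟩ := exists_matrix ζ γ hζ hζs hγs hsq1 hlt hne
  obtain ⟨C, r, hC, hr0, hr1, hdec⟩ := decay hN T (eigen_lt_one T ζ u hu hζi hT1 hT2)
  obtain ⟨c, hc⟩ := solution_exists ζ γ hζ hγ T F u hFF hT1 hT2 hT3 C r hr0 hr1 hdec
  refine ⟨c, hc, ?_⟩
  rintro c' ⟨-, G', Gt', a1, a2, a3, a4, a5, a6⟩
  obtain ⟨-, G, Gt, b1, b2, b3, b4, b5, b6⟩ := hc
  obtain ⟨w, q, g, e1, e2, e3, e4, e5⟩ :=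
    solution_form ζ γ hζ hγ hζi hγi hne c' G' Gt' a1 a2 a3 a4 a5 a6
  obtain ⟨w', q', g', f1, f2, f3, f4, f5⟩ :=
    solution_form ζ γ hζ hγ hζi hγi hne c G Gt b1 b2 b3 b4 b5 b6
  have hgg := solution_unique ζ γ hζs hγs hne w q w' q' g g' e1 e2 e3 e4 f1 f2 f3 f4
  funext n
  apply Complex.ofReal_injective
  rw [e5, f5, hgg]

end
end

section
/- Let (ζ_j)_{j≥1} and (γ_m)_{m≥1} be sequences of real numbers with |ζ_1| > |γ_1| > |ζ_2| > |γ_2| > … > 0 and Σ_{j≥1} ζ_j² < ∞. Then there exists a unique real-valued sequence c ∈ h^{1/2} such that the nonzero eigenvalues of the self-adjoint operator Γ_c are exactly the ζ_j, j ≥ 1, each being a simple eigenvalue, and the nonzero eigenvalues of the self-adjoint operator Γ̃_c are exactly the γ_m, m ≥ 1, each being a simple eigenvalue. -/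
open scoped InnerProductSpace ComplexConjugate ENNReal

noncomputable section

structure Interl (Z g : ℕ → ℝ) : Prop where
  gZ : ∀ j, g j < Z j
  Zg : ∀ j, Z (j+1) < g j
  pos : ∀ j, 0 < g j
  summ : Summable Z

set_option linter.unusedSectionVars false

namespace Interl

variable {Z g : ℕ → ℝ} (h : Interl Z g)
include h

lemma antiZ : StrictAnti Z := strictAnti_nat_of_succ_lt fun n => (h.Zg n).trans (h.gZ n)
lemma antig : StrictAnti g := strictAnti_nat_of_succ_lt fun n => (h.gZ (n+1)).trans (h.Zg n)
lemma Zpos (j : ℕ) : 0 < Z j := (h.pos j).trans (h.gZ j)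
lemma Z_lt_g {i j : ℕ} (hij : i < j) : Z j < g i :=
  (h.antiZ.antitone (Nat.succ_le_of_lt hij)).trans_lt (h.Zg i)
lemma g_lt_Z {i j : ℕ} (hij : i ≤ j) : g j < Z i :=
  (h.gZ j).trans_le (h.antiZ.antitone hij)
lemma Z_ne_g (i j : ℕ) : Z i ≠ g j := by
  rcases le_or_gt i j with hij | hij
  · exact (h.g_lt_Z hij).ne'
  · exact (h.Z_lt_g hij).ne

omit h in
/-- finite approximations of the weights -/
def aN (Z g : ℕ → ℝ) (N j : ℕ) : ℝ :=
  (∏ i ∈ Finset.range N, (Z j - g i)) / ∏ i ∈ (Finset.range N).erase j, (Z j - Z i)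

open Polynomial in
lemma poly_deg (N : ℕ) : (Lagrange.nodal (Finset.range N) g - Lagrange.nodal (Finset.range N) Z).degree < (Finset.range N).card := by
  have h1 : (Lagrange.nodal (Finset.range N) g).degree = (Finset.range N).card := Lagrange.degree_nodal
  rw [← h1]
  apply Polynomial.degree_sub_lt_left
  · rw [Lagrange.degree_nodal, Lagrange.degree_nodal]
  · exact Lagrange.nodal_ne_zero
  · rw [Lagrange.nodal_monic.leadingCoeff, Lagrange.nodal_monic.leadingCoeff]

lemma fin_inv (N : ℕ) (x : ℝ) (hx : ∀ i < N, x ≠ Z i) :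
    1 + ∑ j ∈ Finset.range N, aN Z g N j / (x - Z j) =
      (∏ i ∈ Finset.range N, (x - g i)) / ∏ i ∈ Finset.range N, (x - Z i) := by
  have h1 := Lagrange.eval_interpolate_not_at_node (s := Finset.range N) (v := Z) (x := x)
    (fun i => (Lagrange.nodal (Finset.range N) g - Lagrange.nodal (Finset.range N) Z).eval (Z i))
    (fun i hi => hx i (Finset.mem_range.1 hi))
  rw [← Lagrange.eq_interpolate h.antiZ.injective.injOn (h.poly_deg N)] at h1
  have h2 : (∏ i ∈ Finset.range N, (x - Z i)) ≠ 0 :=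
    Finset.prod_ne_zero_iff.2 fun i hi => sub_ne_zero.2 (hx i (Finset.mem_range.1 hi))
  rw [eq_div_iff h2]
  rw [Polynomial.eval_sub, Lagrange.eval_nodal, Lagrange.eval_nodal] at h1
  have h3 : ∑ j ∈ Finset.range N, aN Z g N j / (x - Z j) = ∑ i ∈ Finset.range N, Lagrange.nodalWeight (Finset.range N) Z i * (x - Z i)⁻¹ *
      Polynomial.eval (Z i) (Lagrange.nodal (Finset.range N) g - Lagrange.nodal (Finset.range N) Z) := by
    refine Finset.sum_congr rfl fun i hi => ?_
    rw [Polynomial.eval_sub, Lagrange.eval_nodal_at_node hi, Lagrange.eval_nodal, aN,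
      Lagrange.nodalWeight, Finset.prod_inv_distrib]
    field_simp
    ring
  rw [h3]
  linarith

lemma fin_sum (N : ℕ) :
    ∑ j ∈ Finset.range N, aN Z g N j = ∑ j ∈ Finset.range N, (Z j - g j) := by
  rcases Nat.eq_zero_or_pos N with rfl | hN
  · simp
  have h1 := Lagrange.coeff_eq_sum h.antiZ.injective.injOn (h.poly_deg N)
  have hc : 0 < (Finset.range N).card := by simpa using hN
  rw [Polynomial.coeff_sub, Lagrange.nodal, Lagrange.nodal, Polynomial.prod_X_sub_C_coeff_card_pred _ _ hc,
    Polynomial.prod_X_sub_C_coeff_card_pred _ _ hc] at h1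
  rw [Finset.sum_sub_distrib]
  refine Eq.trans (Finset.sum_congr rfl fun i hi => ?_) (h1.symm.trans (by ring))
  change _ = Polynomial.eval (Z i) (Lagrange.nodal (Finset.range N) g - Lagrange.nodal (Finset.range N) Z) / _
  rw [Polynomial.eval_sub, Lagrange.eval_nodal_at_node hi, Lagrange.eval_nodal, aN, sub_zero]

lemma aN_eq {N j : ℕ} (hj : j < N) : aN Z g N j = (Z j - g j) *
    ∏ i ∈ (Finset.range N).erase j, ((Z j - g i) / (Z j - Z i)) := by
  rw [aN, ← Finset.mul_prod_erase _ _ (Finset.mem_range.2 hj), Finset.prod_div_distrib, mul_div_assoc]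

lemma aN_pos {N j : ℕ} (hj : j < N) : 0 < aN Z g N j := by
  rw [h.aN_eq hj]
  refine mul_pos (sub_pos.2 (h.gZ j)) (Finset.prod_pos fun i hi => ?_)
  rcases lt_or_gt_of_ne (Finset.ne_of_mem_erase hi) with hij | hij
  · exact div_pos_of_neg_of_neg (sub_neg.2 (h.Z_lt_g hij)) (sub_neg.2 (h.antiZ hij))
  · exact div_pos (sub_pos.2 (h.g_lt_Z hij.le)) (sub_pos.2 (h.antiZ hij))

lemma aN_succ {N j : ℕ} (hj : j < N) : aN Z g N j ≤ aN Z g (N+1) j := by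
  have h1 : aN Z g (N+1) j = aN Z g N j * ((Z j - g N) / (Z j - Z N)) := by
    rw [h.aN_eq hj, h.aN_eq (hj.trans (Nat.lt_succ_self N)), Finset.range_add_one,
      Finset.erase_insert_of_ne hj.ne', Finset.prod_insert (by simp)]
    ring
  rw [h1]
  refine le_mul_of_one_le_right (h.aN_pos hj).le ?_
  rw [one_le_div (sub_pos.2 (h.antiZ hj))]
  linarith [h.gZ N]

lemma aN_mono {j N M : ℕ} (hj : j < N) (hNM : N ≤ M) : aN Z g N j ≤ aN Z g M j := by
  induction M, hNM using Nat.le_induction with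
  | base => exact le_rfl
  | succ M hM ih => exact ih.trans (h.aN_succ (hj.trans_le hM))

lemma summ_g : Summable g := h.summ.of_nonneg_of_le (fun j => (h.pos j).le) fun j => (h.gZ j).le
lemma summ_sub : Summable fun j => Z j - g j := h.summ.sub h.summ_g

lemma sum_aN_le {N M : ℕ} (hM : M ≤ N) : ∑ j ∈ Finset.range M, aN Z g N j ≤ ∑' j, (Z j - g j) := by
  calc _ ≤ ∑ j ∈ Finset.range N, aN Z g N j :=
        Finset.sum_le_sum_of_subset_of_nonneg (Finset.range_mono hM)
          fun i hi _ => (h.aN_pos (Finset.mem_range.1 hi)).le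
    _ = _ := h.fin_sum N
    _ ≤ _ := h.summ_sub.sum_le_tsum _ fun i _ => (sub_pos.2 (h.gZ i)).le

omit h in
/-- the limiting weights -/
def aw (Z g : ℕ → ℝ) (j : ℕ) : ℝ := ⨆ N, aN Z g (j + 1 + N) j

lemma aN_bdd (j : ℕ) : BddAbove (Set.range fun N => aN Z g (j + 1 + N) j) := by
  refine ⟨∑' j, (Z j - g j), ?_⟩
  rintro _ ⟨N, rfl⟩
  refine le_trans ?_ (h.sum_aN_le (le_refl (j+1+N)))
  exact Finset.single_le_sum (f := fun i => aN Z g (j+1+N) i) (fun i hi => (h.aN_pos (Finset.mem_range.1 hi)).le)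
    (Finset.mem_range.2 (by omega))

lemma aN_le {j N : ℕ} (hj : j < N) : aN Z g N j ≤ aw Z g j := by
  obtain ⟨M, rfl⟩ := Nat.exists_eq_add_of_le (Nat.succ_le_of_lt hj)
  exact le_ciSup (h.aN_bdd j) M

lemma aw_pos (j : ℕ) : 0 < aw Z g j := (h.aN_pos (Nat.lt_succ_self j)).trans_le (h.aN_le (Nat.lt_succ_self j))

open Filter Topology

lemma aN_tendsto (j : ℕ) : Tendsto (fun N => aN Z g N j) atTop (𝓝 (aw Z g j)) := by
  have h1 : Tendsto (fun N => aN Z g (j + 1 + N) j) atTop (𝓝 (aw Z g j)) := by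
    refine tendsto_atTop_ciSup (fun N M hNM => h.aN_mono (by omega) (by omega)) (h.aN_bdd j)
  rw [← tendsto_add_atTop_iff_nat (j+1)]
  simpa [add_comm] using h1

lemma aw_hasSum : HasSum (aw Z g) (∑' j, (Z j - g j)) := by
  have hle : ∀ M, ∑ j ∈ Finset.range M, aw Z g j ≤ ∑' j, (Z j - g j) := by
    intro M
    refine le_of_tendsto (tendsto_finsetSum (Finset.range M) fun j _ => h.aN_tendsto j) ?_
    filter_upwards [eventually_ge_atTop M] with N hN using h.sum_aN_le hN
  have hs : Summable (aw Z g) := summable_of_sum_range_le (fun j => (h.aw_pos j).le) hle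
  have h1 : ∑' j, aw Z g j ≤ ∑' j, (Z j - g j) := hs.tsum_le_of_sum_range_le hle
  have h2 : ∑' j, (Z j - g j) ≤ ∑' j, aw Z g j := by
    refine h.summ_sub.tsum_le_of_sum_range_le fun N => ?_
    rw [← h.fin_sum N]
    refine le_trans (Finset.sum_le_sum fun i hi => h.aN_le (Finset.mem_range.1 hi)) ?_
    exact hs.sum_le_tsum _ fun i _ => (h.aw_pos i).le
  rw [← le_antisymm h1 h2]
  exact hs.hasSum

lemma aw_div_sum_le (M : ℕ) : ∑ j ∈ Finset.range M, aw Z g j / Z j ≤ 1 := by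
  refine le_of_tendsto (tendsto_finsetSum (Finset.range M) fun j _ => (h.aN_tendsto j).div_const (Z j)) ?_
  filter_upwards [eventually_ge_atTop M] with N hN
  have h1 := h.fin_inv N 0 (fun i _ => (h.Zpos i).ne)
  have h2 : 0 ≤ (∏ i ∈ Finset.range N, (0 - g i)) / ∏ i ∈ Finset.range N, (0 - Z i) := by
    rw [← Finset.prod_div_distrib]
    exact Finset.prod_nonneg fun i _ => div_nonneg_of_nonpos (by linarith [h.pos i]) (by linarith [h.Zpos i])
  rw [← h1] at h2
  simp only [zero_sub, div_neg, Finset.sum_neg_distrib] at h2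
  calc _ ≤ ∑ j ∈ Finset.range N, aN Z g N j / Z j :=
        Finset.sum_le_sum_of_subset_of_nonneg (Finset.range_mono hN)
          fun i hi _ => (div_pos (h.aN_pos (Finset.mem_range.1 hi)) (h.Zpos i)).le
    _ ≤ 1 := by linarith

lemma aw_div_summable : Summable fun j => aw Z g j / Z j :=
  summable_of_sum_range_le (fun j => (div_pos (h.aw_pos j) (h.Zpos j)).le) h.aw_div_sum_le

lemma aw_div_tsum : ∑' j, aw Z g j / Z j ≤ 1 := h.aw_div_summable.tsum_le_of_sum_range_le h.aw_div_sum_le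

lemma gap (m : ℕ) : ∃ δ > 0, ∀ j, δ ≤ |Z j - g m| := by
  refine ⟨min (Z m - g m) (g m - Z (m+1)), lt_min (sub_pos.2 (h.gZ m)) (sub_pos.2 (h.Zg m)), fun j => ?_⟩
  rcases le_or_gt j m with hj | hj
  · refine (min_le_left _ _).trans (le_trans ?_ (le_abs_self _))
    linarith [h.antiZ.antitone hj]
  · refine (min_le_right _ _).trans (le_trans ?_ (neg_le_abs _))
    linarith [h.antiZ.antitone (Nat.succ_le_of_lt hj)]

lemma aw_eq_one (m : ℕ) : HasSum (fun j => aw Z g j / (Z j - g m)) 1 := by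
  obtain ⟨δ, hδ, hgap⟩ := h.gap m
  have hsb : Summable fun j => aw Z g j / δ := h.aw_hasSum.summable.div_const δ
  have hb : ∀ j, ∀ x, 0 ≤ x → x ≤ aw Z g j → ‖x / (Z j - g m)‖ ≤ aw Z g j / δ := by
    intro j x hx hxa
    rw [norm_div, Real.norm_eq_abs, Real.norm_eq_abs, abs_of_nonneg hx]
    have := (h.aw_pos j).le
    gcongr
    exact hgap j
  have hs : Summable fun j => aw Z g j / (Z j - g m) :=
    hsb.of_norm_bounded (fun j => hb j _ (h.aw_pos j).le le_rfl)
  have hlim := tendsto_tsum_of_dominated_convergence (𝓕 := atTop)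
    (f := fun N j => if j < N then aN Z g N j / (Z j - g m) else 0)
    (g := fun j => aw Z g j / (Z j - g m)) (bound := fun j => aw Z g j / δ) hsb
    (fun j => by
      refine ((h.aN_tendsto j).div_const (Z j - g m)).congr' ?_
      filter_upwards [eventually_gt_atTop j] with N hN
      simp [hN])
    (Eventually.of_forall fun N j => by
      split_ifs with hj
      · exact hb j _ (h.aN_pos hj).le (h.aN_le hj)
      · simpa using (div_pos (h.aw_pos j) hδ).le)
  have h1 : Tendsto (fun N => ∑' j, if j < N then aN Z g N j / (Z j - g m) else 0) atTop (𝓝 1) := by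
    refine tendsto_const_nhds.congr' ?_
    filter_upwards [eventually_gt_atTop m] with N hN
    rw [tsum_eq_sum (s := Finset.range N) (fun j hj => by simp at hj; simp [hj])]
    have h2 := h.fin_inv N (g m) (fun i _ => (h.Z_ne_g i m).symm)
    rw [Finset.prod_eq_zero (Finset.mem_range.2 hN) (sub_self (g m)), zero_div] at h2
    rw [Finset.sum_congr rfl (g := fun j => - (aN Z g N j / (g m - Z j)))]
    · rw [Finset.sum_neg_distrib]; linarith
    · intro j hj
      rw [if_pos (Finset.mem_range.1 hj), ← div_neg, neg_sub]
  rw [← tendsto_nhds_unique hlim h1]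
  exact hs.hasSum

lemma aN_le_of_sol {b : ℕ → ℝ} (hb : ∀ j, 0 ≤ b j)
    (hs : ∀ m, HasSum (fun j => b j / (Z j - g m)) 1) {N k : ℕ} (hk : k < N) : aN Z g N k ≤ b k := by
  have hinj : Set.InjOn g (Finset.range N : Finset ℕ) := h.antig.injective.injOn
  set P := Lagrange.nodal ((Finset.range N).erase k) Z with hP
  have hPdeg : P.degree + 1 = (Finset.range N).card := by
    rw [hP, Lagrange.degree_nodal, Finset.card_erase_of_mem (Finset.mem_range.2 hk), Finset.card_range]
    norm_cast; omega
  have hPlt : P.degree < (Finset.range N).card := by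
    rw [hP, Lagrange.degree_nodal, Finset.card_erase_of_mem (Finset.mem_range.2 hk), Finset.card_range]
    norm_cast; omega
  set w : ℕ → ℝ := fun m => Lagrange.nodalWeight (Finset.range N) g m * P.eval (g m) with hw
  have hw1 : ∑ m ∈ Finset.range N, w m = 1 := by
    have := Lagrange.leadingCoeff_eq_sum hinj hPdeg.symm
    rw [Lagrange.nodal_monic.leadingCoeff] at this
    rw [this]
    refine Finset.sum_congr rfl fun i _ => ?_
    simp only [hw, Lagrange.nodalWeight, Finset.prod_inv_distrib]
    ring
  have hw2 : ∀ j, ∑ m ∈ Finset.range N, w m * (b j / (Z j - g m)) =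
      b j * (P.eval (Z j) / ∏ m ∈ Finset.range N, (Z j - g m)) := by
    intro j
    have h1 := Lagrange.eval_interpolate_not_at_node (s := Finset.range N) (v := g) (x := Z j)
      (fun i => P.eval (g i)) (fun i _ => h.Z_ne_g j i)
    rw [← Lagrange.eq_interpolate hinj hPlt, Lagrange.eval_nodal (s := Finset.range N)] at h1
    have h2 : (∏ i ∈ Finset.range N, (Z j - g i)) ≠ 0 :=
      Finset.prod_ne_zero_iff.2 fun i hi => sub_ne_zero.2 (h.Z_ne_g j i)
    rw [h1, mul_div_cancel_left₀ _ h2, Finset.mul_sum]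
    refine Finset.sum_congr rfl fun i _ => ?_
    simp only [hw]; ring
  have hsum : HasSum (fun j => ∑ m ∈ Finset.range N, w m * (b j / (Z j - g m))) (∑ m ∈ Finset.range N, w m * 1) :=
    hasSum_sum fun m _ => (hs m).mul_left (w m)
  simp only [mul_one, hw1, hw2] at hsum
  have hle : ∀ j, b j * (P.eval (Z j) / ∏ m ∈ Finset.range N, (Z j - g m)) ≤
      if j = k then b k / aN Z g N k else 0 := by
    intro j
    split_ifs with hjk
    · subst hjk
      rw [hP, Lagrange.eval_nodal, aN, div_div_eq_mul_div, mul_div_assoc]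
    · rcases lt_or_ge j N with hj | hj
      · rw [hP, Lagrange.eval_nodal_at_node (Finset.mem_erase.2 ⟨hjk, Finset.mem_range.2 hj⟩)]
        simp
      · refine mul_nonpos_of_nonneg_of_nonpos (hb j) ?_
        rw [hP, Lagrange.eval_nodal, ← Finset.mul_prod_erase _ _ (Finset.mem_range.2 hk), div_mul_eq_div_div_swap, ← Finset.prod_div_distrib]
        refine div_nonpos_of_nonneg_of_nonpos (Finset.prod_nonneg fun i hi => ?_) (by linarith [h.Z_lt_g (hk.trans_le hj)])
        have hi' : i < j := (Finset.mem_range.1 (Finset.mem_of_mem_erase hi)).trans_le hj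
        exact div_nonneg_of_nonpos (by linarith [h.antiZ hi']) (by linarith [h.Z_lt_g hi'])
  have := hasSum_le hle hsum (hasSum_ite_eq k (b k / aN Z g N k))
  rwa [one_le_div (h.aN_pos hk)] at this

lemma sol_unique {b : ℕ → ℝ} (hb : ∀ j, 0 ≤ b j)
    (hs : ∀ m, HasSum (fun j => b j / (Z j - g m)) 1) (hS : HasSum b (∑' j, (Z j - g j))) :
    b = aw Z g := by
  have hle : ∀ k, aw Z g k ≤ b k := fun k => by
    refine le_of_tendsto (h.aN_tendsto k) ?_
    filter_upwards [eventually_gt_atTop k] with N hN using h.aN_le_of_sol hb hs hN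
  have h0 := hS.sub h.aw_hasSum
  rw [sub_self] at h0
  have := (hasSum_zero_iff_of_nonneg (fun k => sub_nonneg.2 (hle k))).1 h0
  funext k
  have := congrFun this k
  simp at this
  linarith

end Interl

set_option linter.unusedSectionVars false

section Hilb
open Filter Topology

variable {E : Type*} [NormedAddCommGroup E] [InnerProductSpace ℂ E] [CompleteSpace E]

omit [CompleteSpace E] in
lemma hasSum_inner_right {f : ℕ → E} {y : E} (h : HasSum f y) (x : E) :
    HasSum (fun j => ⟪x, f j⟫_ℂ) ⟪x, y⟫_ℂ := h.mapL (innerSL ℂ x)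

omit [CompleteSpace E] in
lemma ortho_coef {u : ℕ → E} (hu : Orthonormal ℂ u) {a : ℕ → ℂ} {y : E}
    (h : HasSum (fun j => a j • u j) y) (j : ℕ) : ⟪u j, y⟫_ℂ = a j := by
  have h1 := hasSum_inner_right h (u j)
  refine h1.unique ?_
  convert hasSum_ite_eq j (a j) using 1
  funext i
  rw [inner_smul_right, orthonormal_iff_ite.1 hu]
  by_cases hij : i = j
  · simp [hij]
  · simp [hij, Ne.symm hij]

omit [CompleteSpace E] in
lemma ortho_norm_sq {u : ℕ → E} (hu : Orthonormal ℂ u) {a : ℕ → ℂ} {y : E}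
    (h : HasSum (fun j => a j • u j) y) : HasSum (fun j => ‖a j‖ ^ 2) (‖y‖ ^ 2) := by
  have h1 := hasSum_inner_right h y
  have h2 : HasSum (fun j => ((‖a j‖ ^ 2 : ℝ) : ℂ)) ((‖y‖ ^ 2 : ℝ) : ℂ) := by
    convert h1 using 1
    · funext j
      rw [inner_smul_right, ← inner_conj_symm y, ortho_coef hu h j, Complex.mul_conj]
      simp [Complex.normSq_eq_norm_sq]
    · rw [inner_self_eq_norm_sq_to_K]; simp
  exact_mod_cast h2

lemma ortho_summable {u : ℕ → E} (hu : Orthonormal ℂ u) {a : ℕ → ℂ}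
    (h : Summable fun j => ‖a j‖ ^ 2) : Summable fun j => a j • u j := by
  have := (hu.orthogonalFamily.summable_iff_norm_sq_summable a).2 h
  simpa using this

lemma hasSum_of_perp {u : ℕ → E} (hu : Orthonormal ℂ u) {y : E}
    (h : ∀ x, (∀ j, ⟪u j, x⟫_ℂ = 0) → ⟪x, y⟫_ℂ = 0) :
    HasSum (fun j => ⟪u j, y⟫_ℂ • u j) y := by
  obtain ⟨z, hz⟩ := ortho_summable hu (hu.inner_products_summable (x := y))
  have hzc := ortho_coef hu hz
  have hperp : ∀ j, ⟪u j, y - z⟫_ℂ = 0 := fun j => by rw [inner_sub_right, hzc, sub_self]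
  have h1 := h _ hperp
  have h2 : ⟪y - z, z⟫_ℂ = 0 := by
    refine (hasSum_inner_right hz (y - z)).unique ?_
    convert hasSum_zero using 1
    funext j
    rw [inner_smul_right, ← inner_conj_symm (y - z), hperp]; simp
  have h3 : ⟪y - z, y - z⟫_ℂ = 0 := by rw [inner_sub_right, h1, h2, sub_zero]
  rw [inner_self_eq_zero, sub_eq_zero] at h3
  rw [h3] at hz ⊢
  simpa [hzc] using hz

/-- `T` is diagonal with eigenvalues `ζ` along the orthonormal family `u`. -/
def IsDiag (T : E →L[ℂ] E) (ζ : ℕ → ℝ) (u : ℕ → E) : Prop :=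
  Orthonormal ℂ u ∧ ∀ x, HasSum (fun j => ((ζ j : ℂ) * ⟪u j, x⟫_ℂ) • u j) (T x)

namespace IsDiag
variable {T : E →L[ℂ] E} {ζ : ℕ → ℝ} {u : ℕ → E} (h : IsDiag T ζ u)
include h

lemma inner_left (j : ℕ) (x : E) : ⟪u j, T x⟫_ℂ = ζ j * ⟪u j, x⟫_ℂ := ortho_coef h.1 (h.2 x) j

lemma norm_sq (x : E) : HasSum (fun j => ζ j ^ 2 * ‖⟪u j, x⟫_ℂ‖ ^ 2) (‖T x‖ ^ 2) := by
  convert ortho_norm_sq h.1 (h.2 x) using 2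
  rw [norm_mul, mul_pow]; simp

lemma apply_u (j : ℕ) : T (u j) = (ζ j : ℂ) • u j := by
  refine (h.2 (u j)).unique ?_
  convert hasSum_ite_eq j ((ζ j : ℂ) • u j) using 1
  funext i
  rw [orthonormal_iff_ite.1 h.1]
  by_cases hij : i = j
  · simp [hij]
  · simp [hij]

lemma symm (x y : E) : ⟪T x, y⟫_ℂ = ⟪x, T y⟫_ℂ := by
  have h1 := hasSum_inner_right (h.2 y) x
  have h2 := (hasSum_inner_right (h.2 x) y).map (starRingEnd ℂ) Complex.continuous_conj
  rw [inner_conj_symm] at h2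
  refine h2.unique ?_
  convert h1 using 1
  funext j
  simp only [Function.comp, inner_smul_right, map_mul, inner_conj_symm, Complex.conj_ofReal]
  ring

lemma zero_of_perp {x : E} (hx : ∀ j, ⟪u j, x⟫_ℂ = 0) : T x = 0 := by
  refine (h.2 x).unique ?_
  simp [hx, hasSum_zero]

lemma eig_coef {z : ℂ} {y : E} (hy : T y = z • y) (j : ℕ) : (z - ζ j) * ⟪u j, y⟫_ℂ = 0 := by
  have := h.inner_left j y
  rw [hy, inner_smul_right] at this
  linear_combination this

lemma eig_eq (hinj : Function.Injective ζ) {j : ℕ} (hj : ζ j ≠ 0) {y : E} (hy : T y = (ζ j : ℂ) • y) :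
    ⟪u j, y⟫_ℂ • u j = y := by
  have hj' : (ζ j : ℂ) ≠ 0 := by exact_mod_cast hj
  have h1 : T y = (ζ j : ℂ) • (⟪u j, y⟫_ℂ • u j) := by
    refine (h.2 y).unique ?_
    convert hasSum_ite_eq j ((ζ j : ℂ) • (⟪u j, y⟫_ℂ • u j)) using 1
    funext i
    by_cases hij : i = j
    · simp [hij, smul_smul]
    · have := h.eig_coef hy i
      have hne : (ζ j : ℂ) - ζ i ≠ 0 := by
        rw [sub_ne_zero]; exact_mod_cast fun (e : ζ j = ζ i) => hij (hinj e.symm)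
      simp [(mul_eq_zero.1 this).resolve_left hne, hij]
  rw [hy] at h1
  exact (smul_right_injective E hj' h1).symm

lemma eigs (_hinj : Function.Injective ζ) (hz : ∀ j, ζ j ≠ 0) :
    {z : ℂ | z ≠ 0 ∧ Module.End.HasEigenvalue T.toLinearMap z} = Set.range (fun j : ℕ => (ζ j : ℂ)) := by
  ext z
  constructor
  · rintro ⟨hz0, hz1⟩
    obtain ⟨y, hy⟩ := hz1.exists_hasEigenvector
    have hTy : T y = z • y := hy.apply_eq_smul
    by_contra hcon
    have : ∀ j, ⟪u j, y⟫_ℂ = 0 := fun j => by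
      refine (mul_eq_zero.1 (h.eig_coef hTy j)).resolve_left ?_
      rw [sub_eq_zero]
      exact fun e => hcon ⟨j, e.symm⟩
    have h0 := h.zero_of_perp this
    rw [hTy, smul_eq_zero] at h0
    exact h0.elim hz0 hy.2
  · rintro ⟨j, rfl⟩
    refine ⟨Complex.ofReal_ne_zero.2 (hz j), ?_⟩
    refine Module.End.hasEigenvalue_of_hasEigenvector (x := u j) ⟨?_, h.1.ne_zero j⟩
    rw [Module.End.mem_eigenspace_iff]
    exact h.apply_u j

lemma finrank (hinj : Function.Injective ζ) (hz : ∀ j, ζ j ≠ 0) (j : ℕ) :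
    Module.finrank ℂ (Module.End.eigenspace T.toLinearMap (ζ j : ℂ)) = 1 := by
  rw [finrank_eq_one_iff']
  refine ⟨⟨u j, ?_⟩, ?_, ?_⟩
  · rw [Module.End.mem_eigenspace_iff]; exact h.apply_u j
  · intro e
    exact h.1.ne_zero j (congrArg Subtype.val e)
  · rintro ⟨w, hw⟩
    rw [Module.End.mem_eigenspace_iff] at hw
    exact ⟨⟪u j, w⟫_ℂ, Subtype.ext (h.eig_eq hinj (hz j) hw)⟩

lemma hs_sum (e : HilbertBasis ℕ ℂ E) :
    ∑' n, ENNReal.ofReal (‖T (e n)‖ ^ 2) = ∑' j, ENNReal.ofReal (ζ j ^ 2) := by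
  have h1 : ∀ n, ENNReal.ofReal (‖T (e n)‖ ^ 2) =
      ∑' j, ENNReal.ofReal (ζ j ^ 2) * ENNReal.ofReal (‖⟪u j, e n⟫_ℂ‖ ^ 2) := by
    intro n
    rw [← (h.norm_sq (e n)).tsum_eq, ENNReal.ofReal_tsum_of_nonneg (fun j => by positivity) (h.norm_sq (e n)).summable]
    simp_rw [ENNReal.ofReal_mul (sq_nonneg _)]
  simp_rw [h1]
  rw [ENNReal.tsum_comm]
  refine tsum_congr fun j => ?_
  rw [ENNReal.tsum_mul_left]
  have h2 : HasSum (fun n => ‖⟪u j, e n⟫_ℂ‖ ^ 2) 1 := by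
    have h3 := ortho_norm_sq e.orthonormal (e.hasSum_repr (u j))
    rw [h.1.1 j, one_pow] at h3
    convert h3 using 3
    rw [e.repr_apply_apply, norm_inner_symm]
  rw [← ENNReal.ofReal_tsum_of_nonneg (fun j => by positivity) h2.summable, h2.tsum_eq]
  simp

end IsDiag

lemma exists_isDiag {ζ : ℕ → ℝ} {u : ℕ → E} (hu : Orthonormal ℂ u) {C : ℝ} (hC : ∀ j, |ζ j| ≤ C) :
    ∃ T : E →L[ℂ] E, IsDiag T ζ u := by
  have hC0 : 0 ≤ C := (abs_nonneg _).trans (hC 0)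
  have hle : ∀ x j, ‖(ζ j : ℂ) * ⟪u j, x⟫_ℂ‖ ^ 2 ≤ C ^ 2 * ‖⟪u j, x⟫_ℂ‖ ^ 2 := by
    intro x j
    rw [norm_mul, mul_pow]
    gcongr
    simpa using hC j
  have hs : ∀ x, Summable fun j => ((ζ j : ℂ) * ⟪u j, x⟫_ℂ) • u j := fun x =>
    ortho_summable hu <| ((hu.inner_products_summable (x := x)).mul_left (C ^ 2)).of_nonneg_of_le
      (fun j => by positivity) (hle x)
  let L : E →ₗ[ℂ] E :=
    { toFun := fun x => ∑' j, ((ζ j : ℂ) * ⟪u j, x⟫_ℂ) • u j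
      map_add' := fun x y => by
        rw [← (hs x).tsum_add (hs y)]
        simp only [inner_add_right, mul_add, add_smul]
      map_smul' := fun a x => by
        rw [RingHom.id_apply, ← (hs x).tsum_const_smul]
        refine tsum_congr fun j => ?_
        rw [inner_smul_right, smul_smul]; ring_nf }
  refine ⟨L.mkContinuous C fun x => ?_, hu, fun x => (hs x).hasSum⟩
  have h1 := ortho_norm_sq hu (hs x).hasSum
  have h2 : ‖L x‖ ^ 2 ≤ (C * ‖x‖) ^ 2 := by
    rw [mul_pow]
    refine le_trans (hasSum_le (hle x) h1 ((hu.inner_products_summable (x := x)).mul_left (C ^ 2)).hasSum) ?_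
    rw [tsum_mul_left]
    exact mul_le_mul_of_nonneg_left (hu.tsum_inner_products_le x) (sq_nonneg C)
  exact le_of_sq_le_sq h2 (by positivity)

lemma compact_of_hs {T : E →L[ℂ] E} (hsym : ∀ x y, ⟪T x, y⟫_ℂ = ⟪x, T y⟫_ℂ) (e : HilbertBasis ℕ ℂ E)
    (hs : Summable fun n => ‖T (e n)‖ ^ 2) : IsCompactOperator T := by
  let F : ℕ → E →L[ℂ] E := fun N => ∑ n ∈ Finset.range N, (innerSL ℂ (T (e n))).smulRight (e n)
  have hF : ∀ N, IsCompactOperator (F N) := by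
    intro N
    induction N with
    | zero => simpa [F] using isCompactOperator_zero
    | succ N ih =>
      have : F (N+1) = F N + (innerSL ℂ (T (e N))).smulRight (e N) := Finset.sum_range_succ _ _
      rw [this, FunLike.coe_add]
      refine ih.add ?_
      have h1 : IsCompactOperator (innerSL ℂ (T (e N))) :=
        isCompactOperator_of_locallyCompactSpace_dom (innerSL ℂ (T (e N)))
      exact h1.continuous_comp (g := fun z => z • e N) (by fun_prop)
  have htail : Tendsto (fun N => Real.sqrt (∑' n, ‖T (e (n + N))‖ ^ 2)) atTop (𝓝 0) := by
    have := tendsto_sum_nat_add (fun n => ‖T (e n)‖ ^ 2)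
    simpa using this.sqrt
  refine isCompactOperator_of_tendsto (l := atTop) (F := F) ?_ (Eventually.of_forall hF)
  rw [tendsto_iff_norm_sub_tendsto_zero]
  refine squeeze_zero (fun _ => norm_nonneg _) (fun N => ?_) htail
  refine ContinuousLinearMap.opNorm_le_bound _ (Real.sqrt_nonneg _) fun x => ?_
  rw [← norm_neg, ← neg_apply, neg_sub]
  have hsN : Summable fun n => ‖T (e (n + N))‖ ^ 2 := (summable_nat_add_iff N).2 hs
  have h1 : HasSum (fun n => ⟪T (e n), x⟫_ℂ • e n) (T x) := by
    have := e.hasSum_repr (T x)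
    simpa only [e.repr_apply_apply, hsym] using this
  have h2 : HasSum (fun n => ⟪T (e (n + N)), x⟫_ℂ • e (n + N)) ((T - F N) x) := by
    have := (hasSum_nat_add_iff' N).2 h1
    simpa [F] using this
  have h3 := ortho_norm_sq (u := fun n => e (n + N)) (e.orthonormal.comp _ (add_left_injective N)) h2
  have h4 : ‖(T - F N) x‖ ^ 2 ≤ (Real.sqrt (∑' n, ‖T (e (n + N))‖ ^ 2) * ‖x‖) ^ 2 := by
    rw [mul_pow, Real.sq_sqrt (tsum_nonneg fun n => by positivity), ← tsum_mul_right]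
    refine hasSum_le (fun n => ?_) h3 (hsN.mul_right _).hasSum
    rw [← mul_pow]
    gcongr
    exact norm_inner_le_norm _ _
  exact le_of_sq_le_sq h4 (by positivity)

lemma exists_diag_of_eigs {T : E →L[ℂ] E} (hsym : ∀ x y, ⟪T x, y⟫_ℂ = ⟪x, T y⟫_ℂ)
    (hcomp : IsCompactOperator T) {ζ : ℕ → ℝ} (hinj : Function.Injective ζ)
    (heig : {z : ℂ | z ≠ 0 ∧ Module.End.HasEigenvalue T.toLinearMap z} = Set.range (fun j : ℕ => (ζ j : ℂ)))
    (hfin : ∀ j : ℕ, Module.finrank ℂ (Module.End.eigenspace T.toLinearMap (ζ j : ℂ)) = 1) (c : E) :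
    ∃ (u : ℕ → E) (ν : ℕ → ℝ), IsDiag T ζ u ∧ ∀ j, 0 ≤ ν j ∧ ⟪c, u j⟫_ℂ = ν j := by
  have hex : ∀ j, ∃ w : E, ‖w‖ = 1 ∧ T w = (ζ j : ℂ) • w ∧ (∀ y, T y = (ζ j : ℂ) • y → ∃ a : ℂ, a • w = y) ∧
      ∃ r : ℝ, 0 ≤ r ∧ ⟪c, w⟫_ℂ = r := by
    intro j
    obtain ⟨⟨v, hv⟩, hv0, hv1⟩ := finrank_eq_one_iff'.1 (hfin j)
    rw [Module.End.mem_eigenspace_iff] at hv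
    have hv0' : v ≠ 0 := fun e => hv0 (Subtype.ext e)
    have hvn : (‖v‖ : ℂ) ≠ 0 := by exact_mod_cast norm_ne_zero_iff.2 hv0'
    obtain ⟨p, hp1, hp2⟩ : ∃ p : ℂ, ‖p‖ = 1 ∧ p * ⟪c, v⟫_ℂ = ‖⟪c, v⟫_ℂ‖ := by
      by_cases h0 : ⟪c, v⟫_ℂ = 0
      · exact ⟨1, by simp, by simp [h0]⟩
      · have hn : ((‖⟪c, v⟫_ℂ‖ : ℝ) : ℂ) ≠ 0 := by exact_mod_cast norm_ne_zero_iff.2 h0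
        refine ⟨(‖⟪c, v⟫_ℂ‖ : ℂ) / ⟪c, v⟫_ℂ, ?_, div_mul_cancel₀ _ h0⟩
        rw [norm_div]
        simp [h0]
    have hp0 : p ≠ 0 := by rintro rfl; simp at hp1
    refine ⟨(p * (‖v‖ : ℂ)⁻¹) • v, ?_, ?_, ?_, ‖v‖⁻¹ * ‖⟪c, v⟫_ℂ‖, by positivity, ?_⟩
    · rw [norm_smul, norm_mul, hp1]
      have := norm_ne_zero_iff.2 hv0'
      simp [this]
    · rw [map_smul]
      have : T v = (ζ j : ℂ) • v := hv
      rw [this, smul_comm]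
    · intro y hy
      obtain ⟨a, ha⟩ := hv1 ⟨y, by rw [Module.End.mem_eigenspace_iff]; exact hy⟩
      refine ⟨a * (p * (‖v‖ : ℂ)⁻¹)⁻¹, ?_⟩
      rw [smul_smul, mul_assoc, inv_mul_cancel₀ (mul_ne_zero hp0 (inv_ne_zero hvn)), mul_one]
      exact congrArg Subtype.val ha
    · rw [inner_smul_right, mul_assoc, mul_left_comm, hp2]
      push_cast; rfl
  choose u hu1 hu2 hu3 ν hν using hex
  have hu : Orthonormal ℂ u := by
    refine ⟨hu1, fun i j hij => ?_⟩
    have h1 := hsym (u i) (u j)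
    rw [hu2, hu2, inner_smul_left, inner_smul_right, Complex.conj_ofReal] at h1
    have hne : (ζ i : ℂ) - ζ j ≠ 0 := by
      rw [sub_ne_zero]; exact_mod_cast fun (e : ζ i = ζ j) => hij (hinj e)
    have h2 : ((ζ i : ℂ) - ζ j) * ⟪u i, u j⟫_ℂ = 0 := by linear_combination h1
    exact (mul_eq_zero.1 h2).resolve_left hne
  have hker : ∀ x, (∀ j, ⟪u j, x⟫_ℂ = 0) → T x = 0 := by
    intro x hx
    have hbot := ContinuousLinearMap.orthogonalComplement_iSup_eigenspaces_eq_bot (T := T) hcomp hsym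
    have hmem : T x ∈ (⨆ μ, Module.End.eigenspace (T : Module.End ℂ E) μ)ᗮ := by
      rw [← Submodule.iInf_orthogonal, Submodule.mem_iInf]
      intro μ
      rw [Submodule.mem_orthogonal]
      intro y hy
      rw [Module.End.mem_eigenspace_iff] at hy
      have hy' : T y = μ • y := hy
      rw [← hsym, hy', inner_smul_left]
      by_cases hμ : μ = 0
      · simp [hμ]
      by_cases hy0 : y = 0
      · simp [hy0]
      have : μ ∈ {z : ℂ | z ≠ 0 ∧ Module.End.HasEigenvalue T.toLinearMap z} :=
        ⟨hμ, Module.End.hasEigenvalue_of_hasEigenvector (x := y) ⟨by rw [Module.End.mem_eigenspace_iff]; exact hy, hy0⟩⟩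
      rw [heig] at this
      obtain ⟨j, rfl⟩ := this
      obtain ⟨a, rfl⟩ := hu3 j y hy'
      rw [inner_smul_left, hx]; simp
    rw [hbot, Submodule.mem_bot] at hmem
    exact hmem
  refine ⟨u, ν, ⟨hu, fun x => ?_⟩, hν⟩
  have h1 : HasSum (fun j => ⟪u j, T x⟫_ℂ • u j) (T x) := by
    refine hasSum_of_perp hu fun y hy => ?_
    rw [← hsym, hker y hy, inner_zero_left]
  convert h1 using 3
  rw [← hsym, hu2, inner_smul_left, Complex.conj_ofReal]

end Hilb

section Hank

/-- The standard Hilbert basis of `L2`. -/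
def stdB : HilbertBasis ℕ ℂ L2 := HilbertBasis.ofRepr (LinearIsometryEquiv.refl ℂ L2)

lemma stdB_inner (n : ℕ) (x : L2) : ⟪stdB n, x⟫_ℂ = (x : ℕ → ℂ) n := by
  rw [← stdB.repr_apply_apply]; rfl

lemma stdB_apply (n p : ℕ) : (stdB n : ℕ → ℂ) p = if p = n then 1 else 0 := by
  rw [← stdB_inner, orthonormal_iff_ite.1 stdB.orthonormal]

lemma L2_ext {x y : L2} (h : ∀ n, (x : ℕ → ℂ) n = (y : ℕ → ℂ) n) : x = y :=
  lp.ext (funext h)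

lemma L2_norm_sq (x : L2) : HasSum (fun n => ‖(x : ℕ → ℂ) n‖ ^ 2) (‖x‖ ^ 2) :=
  ortho_norm_sq stdB.orthonormal (stdB.hasSum_repr x)

lemma clm_ext_basis {E F : Type*} [NormedAddCommGroup E] [InnerProductSpace ℂ E]
    [NormedAddCommGroup F] [InnerProductSpace ℂ F]
    (e : HilbertBasis ℕ ℂ E) {A B : E →L[ℂ] F} (h : ∀ n, A (e n) = B (e n)) : A = B := by
  ext x
  have h1 := (e.hasSum_repr x).mapL A
  have h2 := (e.hasSum_repr x).mapL B
  simp only [map_smul, h] at h1 h2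
  exact h1.unique h2

lemma anti_sum (f : ℕ → ℝ≥0∞) : ∑' n, ∑' p, f (p + n) = ∑' k : ℕ, ((k + 1 : ℕ) : ℝ≥0∞) * f k := by
  rw [← ENNReal.tsum_prod (f := fun n p => f (p + n)),
    ← Equiv.tsum_eq Finset.HasAntidiagonal.sigmaAntidiagonalEquivProd, ENNReal.tsum_sigma']
  refine tsum_congr fun k => ?_
  rw [tsum_fintype]
  rw [Finset.sum_congr rfl (g := fun _ => f k)]
  · simp
  · rintro ⟨⟨a, b⟩, hab⟩ _
    have hab' : a + b = k := Finset.HasAntidiagonal.mem_antidiagonal.1 hab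
    change f (b + a) = f k
    rw [add_comm, hab']

lemma ennreal_tsum_zero_add (f : ℕ → ℝ≥0∞) : ∑' k, f k = f 0 + ∑' k, f (k + 1) :=
  tsum_eq_zero_add' ENNReal.summable

lemma anti_sum_shift (f : ℕ → ℝ≥0∞) : ∑' n, ∑' p, f (p + n + 1) = ∑' k : ℕ, (k : ℝ≥0∞) * f k := by
  rw [anti_sum (fun k => f (k + 1)), ennreal_tsum_zero_add (fun k : ℕ => (k : ℝ≥0∞) * f k)]
  simp

variable {c : ℕ → ℝ} {Γ Γt : L2 →L[ℂ] L2}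

lemma hk_basis {c : ℕ → ℂ} (h : IsHankelOp c Γ) (n p : ℕ) : (Γ (stdB n) : ℕ → ℂ) p = c (p + n) := by
  rw [h]
  rw [tsum_eq_single n]
  · simp [stdB_apply]
  · intro b hb; simp [stdB_apply, hb]

lemma hk_symm (h : IsHankelOp (fun n => (c n : ℂ)) Γ) (x y : L2) : ⟪Γ x, y⟫_ℂ = ⟪x, Γ y⟫_ℂ := by
  have : ContinuousLinearMap.adjoint Γ = Γ := by
    refine clm_ext_basis stdB fun n => L2_ext fun p => ?_
    rw [← stdB_inner, ContinuousLinearMap.adjoint_inner_right, ← inner_conj_symm, stdB_inner, hk_basis h, hk_basis h,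
      Complex.conj_ofReal, add_comm]
  rw [← ContinuousLinearMap.adjoint_inner_right, this]

lemma hk_shift (h : IsHankelOp (fun n => (c n : ℂ)) Γ) (ht : IsHankelOp (shiftSeq fun n => (c n : ℂ)) Γt)
    (x : L2) (n : ℕ) : (Γt x : ℕ → ℂ) n = (Γ x : ℕ → ℂ) (n + 1) := by
  rw [h, ht]
  refine tsum_congr fun p => ?_
  simp only [shiftSeq]
  rw [show n + p + 1 = n + 1 + p by ring]

lemma shift_ofReal (c : ℕ → ℝ) : (shiftSeq fun n => (c n : ℂ)) = fun n => ((fun k => c (k + 1)) n : ℂ) := rfl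

lemma hk_inner (h : IsHankelOp (fun n => (c n : ℂ)) Γ) (ht : IsHankelOp (shiftSeq fun n => (c n : ℂ)) Γt)
    (x y : L2) : ⟪Γ x, Γ y⟫_ℂ = ⟪Γt x, Γt y⟫_ℂ + (starRingEnd ℂ) ((Γ x : ℕ → ℂ) 0) * (Γ y : ℕ → ℂ) 0 := by
  have h1 := lp.hasSum_inner (𝕜 := ℂ) (Γ x) (Γ y)
  have h2 := lp.hasSum_inner (𝕜 := ℂ) (Γt x) (Γt y)
  rw [← h1.tsum_eq, h1.summable.tsum_eq_zero_add, ← h2.tsum_eq, add_comm]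
  congr 1
  · refine tsum_congr fun n => ?_
    rw [hk_shift h ht, hk_shift h ht]
  · rw [RCLike.inner_apply']

lemma hk_norm (c : ℕ → ℝ) (h : IsHankelOp (fun n => (c n : ℂ)) Γ) (n : ℕ) :
    ENNReal.ofReal (‖Γ (stdB n)‖ ^ 2) = ∑' p, ENNReal.ofReal (c (p + n) ^ 2) := by
  have h1 := L2_norm_sq (Γ (stdB n))
  simp only [hk_basis h, Complex.norm_real, Real.norm_eq_abs, sq_abs] at h1
  rw [← h1.tsum_eq, ENNReal.ofReal_tsum_of_nonneg (fun _ => sq_nonneg _) h1.summable]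

lemma hk_hs (h : IsHankelOp (fun n => (c n : ℂ)) Γ) :
    ∑' n, ENNReal.ofReal (‖Γ (stdB n)‖ ^ 2) = ∑' k : ℕ, ((k + 1 : ℕ) : ℝ≥0∞) * ENNReal.ofReal (c k ^ 2) := by
  simp_rw [hk_norm c h]
  exact anti_sum (fun k => ENNReal.ofReal (c k ^ 2))

lemma hk_hs_shift (h : IsHankelOp (shiftSeq fun n => (c n : ℂ)) Γ) :
    ∑' n, ENNReal.ofReal (‖Γ (stdB n)‖ ^ 2) = ∑' k : ℕ, (k : ℝ≥0∞) * ENNReal.ofReal (c k ^ 2) := by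
  rw [shift_ofReal] at h
  simp_rw [hk_norm _ h]
  exact anti_sum_shift (fun k => ENNReal.ofReal (c k ^ 2))

lemma summable_of_ennreal {f : ℕ → ℝ} (hf : ∀ n, 0 ≤ f n) (h : ∑' n, ENNReal.ofReal (f n) ≠ ⊤) : Summable f := by
  have := ENNReal.summable_toReal h
  refine this.congr fun n => ?_
  rw [ENNReal.toReal_ofReal (hf n)]

lemma h12_iff (c : ℕ → ℝ) : InH12 (fun n => (c n : ℂ)) ↔
    ∑' k : ℕ, ((k + 1 : ℕ) : ℝ≥0∞) * ENNReal.ofReal (c k ^ 2) ≠ ⊤ := by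
  have h1 : ∀ k : ℕ, ((k + 1 : ℕ) : ℝ≥0∞) * ENNReal.ofReal (c k ^ 2) = ENNReal.ofReal (((k : ℝ) + 1) * c k ^ 2) := by
    intro k
    rw [ENNReal.ofReal_mul (by positivity), ← ENNReal.ofReal_natCast]; push_cast; rfl
  simp_rw [h1]
  have h2 : (∑' k : ℕ, ENNReal.ofReal (((k : ℝ) + 1) * c k ^ 2) ≠ ⊤) ↔ Summable fun k : ℕ => ((k : ℝ) + 1) * c k ^ 2 :=
    ⟨summable_of_ennreal (fun n => by positivity), fun h => h.tsum_ofReal_ne_top⟩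
  rw [h2]
  have h3 : Memℓp (fun n => (c n : ℂ)) 2 ↔ Summable fun k : ℕ => c k ^ 2 := by
    rw [memℓp_gen_iff (by norm_num)]
    simp
  unfold InH12
  rw [h3]
  simp only [Complex.norm_real, Real.norm_eq_abs, sq_abs]
  constructor
  · rintro ⟨ha, hb⟩
    refine (ha.add hb).congr fun k => by ring
  · intro h
    constructor
    · refine h.of_nonneg_of_le (fun k => by positivity) fun k => ?_
      nlinarith [mul_nonneg (Nat.cast_nonneg (α := ℝ) k) (sq_nonneg (c k))]
    · refine h.of_nonneg_of_le (fun k => by positivity) fun k => ?_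
      nlinarith [sq_nonneg (c k)]

lemma hk_summ (hc : InH12 (fun n => (c n : ℂ))) (h : IsHankelOp (fun n => (c n : ℂ)) Γ) :
    Summable fun n => ‖Γ (stdB n)‖ ^ 2 := by
  refine summable_of_ennreal (fun n => by positivity) ?_
  rw [hk_hs h]; exact (h12_iff c).1 hc

lemma hk_summ_shift (hc : InH12 (fun n => (c n : ℂ))) (h : IsHankelOp (shiftSeq fun n => (c n : ℂ)) Γ) :
    Summable fun n => ‖Γ (stdB n)‖ ^ 2 := by
  refine summable_of_ennreal (fun n => by positivity) ?_
  rw [hk_hs_shift h]; 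
  refine ne_top_of_le_ne_top ((h12_iff c).1 hc) (ENNReal.tsum_le_tsum fun k => ?_)
  gcongr; simp

lemma hk_trace {ζ γ : ℕ → ℝ} {u v : ℕ → L2}
    (h : IsHankelOp (fun n => (c n : ℂ)) Γ) (ht : IsHankelOp (shiftSeq fun n => (c n : ℂ)) Γt)
    (hd : IsDiag Γ ζ u) (hdt : IsDiag Γt γ v) (hζ : Summable fun j => ζ j ^ 2) (hγ : Summable fun j => γ j ^ 2) :
    ‖Γ (stdB 0)‖ ^ 2 = ∑' j, (ζ j ^ 2 - γ j ^ 2) := by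
  have h1 := hd.hs_sum stdB
  have h2 := hdt.hs_sum stdB
  rw [hk_hs h] at h1
  rw [hk_hs_shift ht] at h2
  have h3 := hk_norm c h 0
  have h4 : ENNReal.ofReal (∑' j, ζ j ^ 2) = ENNReal.ofReal (∑' j, γ j ^ 2 + ‖Γ (stdB 0)‖ ^ 2) := by
    rw [ENNReal.ofReal_add (tsum_nonneg fun _ => sq_nonneg _) (by positivity),
      ENNReal.ofReal_tsum_of_nonneg (fun _ => sq_nonneg _) hζ, ENNReal.ofReal_tsum_of_nonneg (fun _ => sq_nonneg _) hγ,
      ← h1, ← h2, h3, ← ENNReal.tsum_add]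
    refine tsum_congr fun k => ?_
    push_cast; simp [add_mul]
  rw [ENNReal.ofReal_eq_ofReal_iff (tsum_nonneg fun _ => sq_nonneg _)
    (add_nonneg (tsum_nonneg fun _ => sq_nonneg _) (by positivity))] at h4
  rw [hζ.tsum_sub hγ, h4]; ring

end Hank

section Uniq

/-- Squares of the normalisation constants. -/
def kap2 (ζ γ : ℕ → ℝ) (m : ℕ) : ℝ :=
  (∑' j, Interl.aw (fun j => ζ j ^ 2) (fun j => γ j ^ 2) j / (ζ j ^ 2 - γ m ^ 2) ^ 2)⁻¹

/-- The vector `ν`. -/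
def nuv (ζ γ : ℕ → ℝ) (j : ℕ) : ℝ := Real.sqrt (Interl.aw (fun j => ζ j ^ 2) (fun j => γ j ^ 2) j)

/-- Coordinates of the standard basis vectors in the eigenbasis. -/
def xsq (ζ γ : ℕ → ℝ) : ℕ → ℕ → ℂ
  | 0, j => (nuv ζ γ j : ℂ) / (ζ j : ℂ)
  | n + 1, i => (ζ i : ℂ)⁻¹ * ∑' j, (∑' m, (γ m : ℂ) * ((kap2 ζ γ m : ℝ) : ℂ) *
      (((nuv ζ γ i * nuv ζ γ j / ((ζ i ^ 2 - γ m ^ 2) * (ζ j ^ 2 - γ m ^ 2)) : ℝ)) : ℂ)) * xsq ζ γ n j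

theorem uniq_formula {ζ γ : ℕ → ℝ} (hI : Interl (fun j => ζ j ^ 2) (fun j => γ j ^ 2))
    (hζi : Function.Injective ζ) (hγi : Function.Injective γ) (hζ0 : ∀ j, ζ j ≠ 0) (hγ0 : ∀ j, γ j ≠ 0)
    {c : ℕ → ℝ} (hc : InH12 (fun n => (c n : ℂ))) {Γ Γt : L2 →L[ℂ] L2}
    (h : IsHankelOp (fun n => (c n : ℂ)) Γ) (ht : IsHankelOp (shiftSeq fun n => (c n : ℂ)) Γt)
    (he : {z : ℂ | z ≠ 0 ∧ Module.End.HasEigenvalue Γ.toLinearMap z} = Set.range (fun j : ℕ => (ζ j : ℂ)))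
    (hf : ∀ j : ℕ, Module.finrank ℂ (Module.End.eigenspace Γ.toLinearMap (ζ j : ℂ)) = 1)
    (het : {z : ℂ | z ≠ 0 ∧ Module.End.HasEigenvalue Γt.toLinearMap z} = Set.range (fun j : ℕ => (γ j : ℂ)))
    (hft : ∀ j : ℕ, Module.finrank ℂ (Module.End.eigenspace Γt.toLinearMap (γ j : ℂ)) = 1) (n : ℕ) :
    (c n : ℂ) = ∑' j, xsq ζ γ n j * (nuv ζ γ j : ℂ) := by
  have hsy := hk_symm h
  have hsyt := hk_symm (c := fun k => c (k + 1)) ht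
  set cv := Γ (stdB 0) with hcv
  obtain ⟨u, ν, hd, hν⟩ := exists_diag_of_eigs hsy (compact_of_hs hsy stdB (hk_summ hc h)) hζi he hf cv
  obtain ⟨v, κ, hdt, hκ⟩ := exists_diag_of_eigs hsyt (compact_of_hs hsyt stdB (hk_summ_shift hc ht)) hγi het hft cv
  have hZg : ∀ j m, ζ j ^ 2 - γ m ^ 2 ≠ 0 := fun j m => sub_ne_zero.2 (hI.Z_ne_g j m)
  have h0 : ∀ x, (Γ x : ℕ → ℂ) 0 = ⟪cv, x⟫_ℂ := fun x => by rw [← stdB_inner, hcv, hsy]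
  have hvu : ∀ m j, ⟪v m, u j⟫_ℂ = ((κ m * ν j / (ζ j ^ 2 - γ m ^ 2) : ℝ) : ℂ) := by
    intro m j
    have h1 := hk_inner h ht (v m) (u j)
    rw [h0, h0, (hν j).2, (hκ m).2, hd.apply_u, hdt.apply_u, inner_smul_right, hsy, hd.apply_u, inner_smul_right,
      inner_smul_left, ← hsyt, hdt.apply_u, inner_smul_left, Complex.conj_ofReal, Complex.conj_ofReal] at h1
    push_cast
    have h2 : (ζ j : ℂ) ^ 2 - (γ m : ℂ) ^ 2 ≠ 0 := by exact_mod_cast hZg j m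
    rw [eq_div_iff h2]
    linear_combination h1
  have huv : ∀ m j, ⟪u j, v m⟫_ℂ = ((κ m * ν j / (ζ j ^ 2 - γ m ^ 2) : ℝ) : ℂ) := by
    intro m j; rw [← inner_conj_symm, hvu, Complex.conj_ofReal]
  have hperp : ∀ y, (∀ j, ⟪u j, y⟫_ℂ = 0) → Γt y = 0 := by
    intro y hy
    refine L2_ext fun k => ?_
    rw [hk_shift h ht, hd.zero_of_perp hy]; rfl
  have hvs : ∀ m, HasSum (fun j => ⟪u j, v m⟫_ℂ • u j) (v m) := by
    intro m
    refine hasSum_of_perp hd.1 fun y hy => ?_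
    have h1 := hsyt y (v m)
    rw [hperp y hy, hdt.apply_u, inner_zero_left, inner_smul_right, eq_comm, mul_eq_zero] at h1
    exact h1.resolve_left (by exact_mod_cast hγ0 m)
  have hts : ∀ x, HasSum (fun j => ⟪u j, Γt x⟫_ℂ • u j) (Γt x) := by
    intro x
    refine hasSum_of_perp hd.1 fun y hy => ?_
    rw [← hsyt, hperp y hy, inner_zero_left]
  have hκ0 : ∀ m, κ m ≠ 0 := by
    intro m h1
    have h2 := ortho_norm_sq hd.1 (hvs m)
    simp only [huv, h1] at h2
    have hz : HasSum (fun j => ‖((0 * ν j / (ζ j ^ 2 - γ m ^ 2) : ℝ) : ℂ)‖ ^ 2) 0 := by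
      simp
    have h3 := h2.unique hz
    rw [hdt.1.1 m] at h3; simp at h3
  have hsol : ∀ m, HasSum (fun j => ν j ^ 2 / (ζ j ^ 2 - γ m ^ 2)) 1 := by
    intro m
    have h1 := hasSum_inner_right (hvs m) cv
    simp only [inner_smul_right, huv, (hν _).2, (hκ m).2] at h1
    have h2 : HasSum (fun j => κ m * ν j / (ζ j ^ 2 - γ m ^ 2) * ν j) (κ m) := by exact_mod_cast h1
    have h3 := h2.mul_left (κ m)⁻¹
    rw [inv_mul_cancel₀ (hκ0 m)] at h3
    refine h3.congr_fun ?_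
    intro j
    have := hκ0 m
    have := hZg j m
    field_simp
  have hcoef : ∀ j, (ζ j : ℂ) * ⟪u j, stdB 0⟫_ℂ = ν j := by
    intro j
    rw [← hd.inner_left, ← hcv, ← inner_conj_symm, (hν j).2, Complex.conj_ofReal]
  have hcs : HasSum (fun j => (ν j : ℂ) • u j) cv := by
    have := hd.2 (stdB 0)
    simpa only [hcoef] using this
  have hnorm : HasSum (fun j => ν j ^ 2) (∑' j, (ζ j ^ 2 - γ j ^ 2)) := by
    rw [← hk_trace h ht hd hdt hI.summ hI.summ_g]
    simpa using ortho_norm_sq hd.1 hcs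
  have haw := hI.sol_unique (fun j => sq_nonneg (ν j)) hsol hnorm
  have hνe : ∀ j, ν j = nuv ζ γ j := by
    intro j
    rw [nuv, ← haw, Real.sqrt_sq (hν j).1]
  have hκe : ∀ m, κ m ^ 2 = kap2 ζ γ m := by
    intro m
    have h2 := ortho_norm_sq hd.1 (hvs m)
    rw [hdt.1.1 m] at h2
    simp only [huv, Complex.norm_real, Real.norm_eq_abs, sq_abs] at h2
    have h3 := h2.mul_left (κ m ^ 2)⁻¹
    have h4 : HasSum (fun j => Interl.aw (fun j => ζ j ^ 2) (fun j => γ j ^ 2) j / (ζ j ^ 2 - γ m ^ 2) ^ 2) (κ m ^ 2)⁻¹ := by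
      rw [one_pow, mul_one] at h3
      refine h3.congr_fun ?_
      intro j
      rw [← haw]
      have := hκ0 m
      have := hZg j m
      field_simp
    rw [kap2, h4.tsum_eq, inv_inv]
  have hx : ∀ n j, ⟪u j, stdB n⟫_ℂ = xsq ζ γ n j := by
    intro n
    induction n with
    | zero =>
      intro j
      rw [xsq, ← hνe, ← hcoef, mul_div_cancel_left₀]
      exact_mod_cast hζ0 j
    | succ n ih =>
      intro i
      have hzi : (ζ i : ℂ) ≠ 0 := by exact_mod_cast hζ0 i
      have h1 : Γ (stdB (n + 1)) = Γt (stdB n) := by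
        refine L2_ext fun k => ?_
        rw [hk_shift h ht, hk_basis h, hk_basis h]
        congr 2; ring
      have h2 := hd.inner_left i (stdB (n + 1))
      rw [h1, ← hsyt] at h2
      have h3 := (hasSum_inner_right (hts (u i)) (stdB n)).map (starRingEnd ℂ) Complex.continuous_conj
      rw [inner_conj_symm] at h3
      rw [xsq, eq_inv_mul_iff_mul_eq₀ hzi, ← h2, ← h3.tsum_eq]
      refine tsum_congr fun j => ?_
      have h4 := hasSum_inner_right (hdt.2 (u j)) (u i)
      simp only [Function.comp, inner_smul_right, map_mul, inner_conj_symm, ih]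
      congr 1
      rw [hsyt, ← h4.tsum_eq]
      refine tsum_congr fun m => ?_
      rw [inner_smul_right, hvu, huv, ← hκe, ← hνe, ← hνe]
      push_cast
      have e1 : (ζ i : ℂ) ^ 2 - (γ m : ℂ) ^ 2 ≠ 0 := by exact_mod_cast hZg i m
      have e2 : (ζ j : ℂ) ^ 2 - (γ m : ℂ) ^ 2 ≠ 0 := by exact_mod_cast hZg j m
      field_simp
  have hfin := (hasSum_inner_right hcs (stdB n)).map (starRingEnd ℂ) Complex.continuous_conj
  rw [stdB_inner, hcv, hk_basis h, Complex.conj_ofReal, add_zero] at hfin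
  rw [← hfin.tsum_eq]
  refine tsum_congr fun j => ?_
  simp only [Function.comp, inner_smul_right, map_mul, inner_conj_symm, hx, Complex.conj_ofReal, hνe]
  ring

end Uniq

set_option linter.unusedSectionVars false

section ModelSec
open Filter Topology

variable {E : Type*} [NormedAddCommGroup E] [InnerProductSpace ℂ E] [CompleteSpace E]

lemma pw_succ (T : E →L[ℂ] E) (n : ℕ) (x : E) : (T ^ (n + 1)) x = T ((T ^ n) x) := by
  rw [pow_succ']; rfl

lemma pw_succ' (T : E →L[ℂ] E) (n : ℕ) (x : E) : (T ^ (n + 1)) x = (T ^ n) (T x) := by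
  rw [pow_succ]; rfl

lemma pw_add (T : E →L[ℂ] E) (n k : ℕ) (x : E) : (T ^ (n + k)) x = (T ^ n) ((T ^ k) x) := by
  rw [pow_add]; rfl

/-- The model operators. -/
structure Model (D T : E →L[ℂ] E) (ζ : ℕ → ℝ) (e : HilbertBasis ℕ ℂ E) (q : E) : Prop where
  diag : IsDiag D ζ e
  inj : Function.Injective ζ
  ne0 : ∀ j, ζ j ≠ 0
  summ : Summable fun j => ζ j ^ 2
  Tin : ∀ x y, ⟪T x, T y⟫_ℂ = ⟪x, y⟫_ℂ - ⟪x, q⟫_ℂ * ⟪q, y⟫_ℂ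
  TD : ∀ x y, ⟪T (D x), y⟫_ℂ = ⟪x, T (D y)⟫_ℂ
  q0 : ∀ j, ⟪q, e j⟫_ℂ ≠ 0

lemma eq_zero_of_basis (e : HilbertBasis ℕ ℂ E) {x : E} (h : ∀ j, ⟪e j, x⟫_ℂ = 0) : x = 0 := by
  have := e.hasSum_repr x
  simp only [e.repr_apply_apply, h, zero_smul] at this
  exact this.unique hasSum_zero

lemma IsDiag.basis_inj {D : E →L[ℂ] E} {ζ : ℕ → ℝ} {e : HilbertBasis ℕ ℂ E} (h : IsDiag D ζ e)
    (h0 : ∀ j, ζ j ≠ 0) {x : E} (hx : D x = 0) : x = 0 := by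
  refine eq_zero_of_basis e fun j => ?_
  have := h.inner_left j x
  rw [hx, inner_zero_right, eq_comm, mul_eq_zero] at this
  exact this.resolve_left (by exact_mod_cast h0 j)

namespace Model
variable {D T : E →L[ℂ] E} {ζ : ℕ → ℝ} {e : HilbertBasis ℕ ℂ E} {q : E} (h : Model D T ζ e q)
include h

lemma norm_T (x : E) : ‖T x‖ ^ 2 = ‖x‖ ^ 2 - ‖⟪q, x⟫_ℂ‖ ^ 2 := by
  have h1 := h.Tin x x
  rw [inner_self_eq_norm_sq_to_K, inner_self_eq_norm_sq_to_K, ← inner_conj_symm x q, mul_comm, Complex.mul_conj,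
    Complex.normSq_eq_norm_sq] at h1
  apply Complex.ofReal_injective
  push_cast at h1 ⊢
  exact h1

lemma norm_le (x : E) : ‖T x‖ ≤ ‖x‖ := by
  refine le_of_sq_le_sq ?_ (norm_nonneg _)
  rw [h.norm_T]; nlinarith [sq_nonneg ‖⟪q, x⟫_ℂ‖]

lemma norm_pow_le (n : ℕ) (x : E) : ‖(T ^ n) x‖ ≤ ‖x‖ := by
  induction n with
  | zero => simp
  | succ n ih => rw [pw_succ]; exact (h.norm_le _).trans ih

lemma sym_pow (n : ℕ) : ∀ x y, ⟪(T ^ n) (D x), y⟫_ℂ = ⟪x, (T ^ n) (D y)⟫_ℂ := by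
  have hA : ∀ y, D (ContinuousLinearMap.adjoint T y) = T (D y) := fun y => by
    refine ext_inner_left ℂ fun x => ?_
    rw [← h.diag.symm, ContinuousLinearMap.adjoint_inner_right, h.TD]
  induction n with
  | zero => intro x y; simpa using h.diag.symm x y
  | succ n ih =>
    intro x y
    rw [pw_succ, ← ContinuousLinearMap.adjoint_inner_right, ih, hA, pw_succ']

lemma nu_tendsto : Tendsto (fun n => (T ^ n) (D q)) atTop (𝓝 0) := by
  have hs : ∀ n, Summable fun j => ‖(T ^ n) (D (e j))‖ ^ 2 := by
    intro n
    refine h.summ.of_nonneg_of_le (fun _ => by positivity) fun j => ?_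
    rw [← sq_abs (ζ j)]
    gcongr
    refine (h.norm_pow_le n _).trans ?_
    rw [h.diag.apply_u, norm_smul, e.orthonormal.1 j]; simp
  have hstep : ∀ n, ‖(T ^ n) (D q)‖ ^ 2 = (∑' j, ‖(T ^ n) (D (e j))‖ ^ 2) - ∑' j, ‖(T ^ (n + 1)) (D (e j))‖ ^ 2 := by
    intro n
    rw [← (hs n).tsum_sub (hs (n + 1))]
    have h1 := ortho_norm_sq e.orthonormal (e.hasSum_repr ((T ^ n) (D q)))
    rw [← h1.tsum_eq]
    refine tsum_congr fun j => ?_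
    rw [pw_succ, h.norm_T, e.repr_apply_apply, ← h.sym_pow, norm_inner_symm]; ring
  have hsum : Summable fun n => ‖(T ^ n) (D q)‖ ^ 2 := by
    refine summable_of_sum_range_le (c := ∑' j, ‖(T ^ 0) (D (e j))‖ ^ 2) (fun _ => by positivity) fun n => ?_
    simp_rw [hstep]
    rw [Finset.sum_range_sub' (fun n => ∑' j, ‖(T ^ n) (D (e j))‖ ^ 2)]
    have : 0 ≤ ∑' j, ‖(T ^ n) (D (e j))‖ ^ 2 := tsum_nonneg fun _ => by positivity
    linarith
  have h2 := hsum.tendsto_atTop_zero.sqrt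
  rw [tendsto_zero_iff_norm_tendsto_zero]
  simpa using h2

lemma L_inner {y : E} (hy : ∀ k, ⟪q, (T ^ k) y⟫_ℂ = 0) (n : ℕ) (z : E) :
    ⟪(T ^ n) z, (T ^ n) y⟫_ℂ = ⟪z, y⟫_ℂ := by
  induction n with
  | zero => simp
  | succ n ih => rw [pw_succ, pw_succ, h.Tin, hy, mul_zero, sub_zero, ih]

lemma L_D {y : E} (hy : ∀ k, ⟪q, (T ^ k) y⟫_ℂ = 0) (k : ℕ) : ⟪q, (T ^ k) (D y)⟫_ℂ = 0 := by
  rw [← h.sym_pow]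
  have h1 : Tendsto (fun n => ‖(T ^ (n + k)) (D q)‖ * ‖y‖) atTop (𝓝 0) := by
    have := ((h.nu_tendsto.comp (tendsto_add_atTop_nat k)).norm).mul_const ‖y‖
    simpa using this
  have h2 : ‖⟪(T ^ k) (D q), y⟫_ℂ‖ ≤ 0 := by
    refine ge_of_tendsto' h1 fun n => ?_
    rw [← h.L_inner hy n, ← pw_add]
    refine (norm_inner_le_norm _ _).trans ?_
    gcongr
    exact h.norm_pow_le n y
  simpa using h2

lemma L_zero {y : E} (hy : ∀ k, ⟪q, (T ^ k) y⟫_ℂ = 0) : y = 0 := by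
  let L : Submodule ℂ E := ⨅ k : ℕ, LinearMap.ker ((innerSL ℂ q).comp (T ^ k)).toLinearMap
  have hmem : ∀ x, x ∈ L ↔ ∀ k, ⟪q, (T ^ k) x⟫_ℂ = 0 := by
    intro x
    rw [Submodule.mem_iInf]
    rfl
  have hcl : IsClosed (L : Set E) := by
    have : (L : Set E) = ⋂ k : ℕ, {x | ⟪q, (T ^ k) x⟫_ℂ = 0} := by
      ext x; simp [hmem]
    rw [this]
    exact isClosed_iInter fun k => isClosed_eq (by fun_prop) continuous_const
  have : CompleteSpace L := hcl.completeSpace_coe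
  refine eq_zero_of_basis e fun j => ?_
  obtain ⟨a, ha, b, hb, hab⟩ := L.exists_add_mem_mem_orthogonal (e j)
  have hDa : D a ∈ L := (hmem _).2 (h.L_D ((hmem _).1 ha))
  have hDb : D b ∈ Lᗮ := by
    rw [Submodule.mem_orthogonal]
    intro x hx
    rw [← h.diag.symm]
    exact (Submodule.mem_orthogonal _ _).1 hb _ ((hmem _).2 (h.L_D ((hmem _).1 hx)))
  have h1 : D a - (ζ j : ℂ) • a = (ζ j : ℂ) • b - D b := by
    have := h.diag.apply_u j
    rw [hab, map_add, smul_add] at this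
    rw [sub_eq_sub_iff_add_eq_add, this, add_comm]
  have h2 : D a - (ζ j : ℂ) • a = 0 := by
    have m1 : D a - (ζ j : ℂ) • a ∈ L := L.sub_mem hDa (L.smul_mem _ ha)
    have m2 : D a - (ζ j : ℂ) • a ∈ Lᗮ := by rw [h1]; exact Submodule.sub_mem _ (Submodule.smul_mem _ _ hb) hDb
    exact inner_self_eq_zero.1 ((Submodule.mem_orthogonal _ _).1 m2 _ m1)
  have h3 := h.diag.eig_eq h.inj (h.ne0 j) (sub_eq_zero.1 h2)
  have h4 : ⟪q, a⟫_ℂ = 0 := by simpa using (hmem _).1 ha 0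
  rw [← h3, inner_smul_right, mul_eq_zero] at h4
  rw [h4.resolve_right (h.q0 j), zero_smul] at h3
  rw [hab, ← h3, zero_add, ← inner_conj_symm, (Submodule.mem_orthogonal _ _).1 hb _ ((hmem _).2 hy), map_zero]

lemma strong (y : E) : Tendsto (fun n => (T ^ n) y) atTop (𝓝 0) := by
  let K : Submodule ℂ E := Submodule.span ℂ (Set.range fun k => (T ^ k) (D q))
  have hK : K.topologicalClosure = ⊤ := by
    rw [Submodule.topologicalClosure_eq_top_iff, Submodule.eq_bot_iff]
    intro z hz
    refine h.diag.basis_inj h.ne0 (h.L_zero fun k => ?_)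
    rw [← h.sym_pow]
    exact (Submodule.mem_orthogonal _ _).1 hz _ (Submodule.subset_span ⟨k, rfl⟩)
  have hspan : ∀ s ∈ K, Tendsto (fun n => (T ^ n) s) atTop (𝓝 0) := by
    intro s hs
    induction hs using Submodule.span_induction with
    | mem x hx =>
      obtain ⟨k, rfl⟩ := hx
      have := h.nu_tendsto.comp (tendsto_add_atTop_nat k)
      refine this.congr fun n => ?_
      rw [Function.comp, pw_add]
    | zero => simp
    | add x y _ _ hx hy => simpa using hx.add hy
    | smul a x _ hx => simpa using hx.const_smul a
  have hy : y ∈ closure (K : Set E) := by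
    rw [← Submodule.topologicalClosure_coe, hK]; trivial
  rw [Metric.tendsto_atTop]
  intro ε hε
  obtain ⟨s, hs, hys⟩ := Metric.mem_closure_iff.1 hy (ε / 2) (by positivity)
  obtain ⟨N, hN⟩ := Metric.tendsto_atTop.1 (hspan s hs) (ε / 2) (by positivity)
  refine ⟨N, fun n hn => ?_⟩
  have h1 := hN n hn
  rw [dist_zero_right] at h1 ⊢
  have h2 : (T ^ n) y = (T ^ n) (y - s) + (T ^ n) s := by rw [map_sub]; abel
  rw [h2]
  have h3 := h.norm_pow_le n (y - s)
  rw [dist_eq_norm] at hys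
  exact (norm_add_le _ _).trans_lt (by linarith)

lemma W_hasSum (y : E) : HasSum (fun n => ‖⟪q, (T ^ n) y⟫_ℂ‖ ^ 2) (‖y‖ ^ 2) := by
  rw [hasSum_iff_tendsto_nat_of_nonneg (fun _ => by positivity)]
  have h1 : ∀ n, ∑ k ∈ Finset.range n, ‖⟪q, (T ^ k) y⟫_ℂ‖ ^ 2 = ‖y‖ ^ 2 - ‖(T ^ n) y‖ ^ 2 := by
    intro n
    induction n with
    | zero => simp
    | succ n ih => rw [Finset.sum_range_succ, ih, pw_succ, h.norm_T]; ring
  simp_rw [h1]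
  simpa using ((h.strong y).norm.pow 2).const_sub (‖y‖ ^ 2)

lemma exists_W : ∃ W : E →ₗᵢ[ℂ] L2, ∀ y n, (W y : ℕ → ℂ) n = ⟪q, (T ^ n) y⟫_ℂ := by
  have hm : ∀ y, Memℓp (fun n => ⟪q, (T ^ n) y⟫_ℂ) 2 := by
    intro y
    rw [memℓp_gen_iff (by norm_num)]
    simpa using (h.W_hasSum y).summable
  let W0 : E →ₗ[ℂ] L2 :=
    { toFun := fun y => ⟨fun n => ⟪q, (T ^ n) y⟫_ℂ, hm y⟩
      map_add' := fun x y => L2_ext fun n => by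
        change ⟪q, (T ^ n) (x + y)⟫_ℂ = ⟪q, (T ^ n) x⟫_ℂ + ⟪q, (T ^ n) y⟫_ℂ
        rw [map_add, inner_add_right]
      map_smul' := fun a x => L2_ext fun n => by
        change ⟪q, (T ^ n) (a • x)⟫_ℂ = a * ⟪q, (T ^ n) x⟫_ℂ
        rw [map_smul, inner_smul_right] }
  refine ⟨⟨W0, fun y => ?_⟩, fun y n => rfl⟩
  have h1 := (L2_norm_sq (W0 y)).unique (h.W_hasSum y)
  exact (sq_eq_sq₀ (norm_nonneg _) (norm_nonneg _)).1 h1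

end Model
end ModelSec

set_option linter.unusedSectionVars false

section ConstrSec
open Filter Topology

variable {E : Type*} [NormedAddCommGroup E] [InnerProductSpace ℂ E] [CompleteSpace E]

lemma IsDiag.conj_isometry {D : E →L[ℂ] E} {ζ : ℕ → ℝ} {u : ℕ → E} (h : IsDiag D ζ u) (W : E →ₗᵢ[ℂ] L2) :
    IsDiag (W.toContinuousLinearMap.comp (D.comp (ContinuousLinearMap.adjoint W.toContinuousLinearMap))) ζ
      (fun j => W (u j)) := by
  refine ⟨h.1.comp_linearIsometry W, fun x => ?_⟩
  have h1 := (h.2 (ContinuousLinearMap.adjoint W.toContinuousLinearMap x)).mapL W.toContinuousLinearMap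
  simp only [map_smul, ContinuousLinearMap.adjoint_inner_right] at h1
  exact h1

lemma Model.conclude {D T : E →L[ℂ] E} {ζ γ : ℕ → ℝ} {e : HilbertBasis ℕ ℂ E} {q : E} (h : Model D T ζ e q)
    {v : ℕ → E} (hdt : IsDiag (T.comp D) γ v) (hγi : Function.Injective γ) (hγ0 : ∀ j, γ j ≠ 0) :
    ∃ c : ℕ → ℝ,
      InH12 (fun n => (c n : ℂ)) ∧
      ∃ Γ Γt : L2 →L[ℂ] L2,
        IsHankelOp (fun n => (c n : ℂ)) Γ ∧
        IsHankelOp (shiftSeq fun n => (c n : ℂ)) Γt ∧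
        {z : ℂ | z ≠ 0 ∧ Module.End.HasEigenvalue Γ.toLinearMap z}
          = Set.range (fun j : ℕ => (ζ j : ℂ)) ∧
        (∀ j : ℕ, Module.finrank ℂ
          (Module.End.eigenspace Γ.toLinearMap (ζ j : ℂ)) = 1) ∧
        {z : ℂ | z ≠ 0 ∧ Module.End.HasEigenvalue Γt.toLinearMap z}
          = Set.range (fun j : ℕ => (γ j : ℂ)) ∧
        (∀ j : ℕ, Module.finrank ℂ
          (Module.End.eigenspace Γt.toLinearMap (γ j : ℂ)) = 1) := by
  obtain ⟨W, hW⟩ := h.exists_W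
  let c : ℕ → ℝ := fun n => (⟪q, (T ^ n) (D q)⟫_ℂ).re
  have hc : ∀ n, (c n : ℂ) = ⟪q, (T ^ n) (D q)⟫_ℂ := by
    intro n
    refine Complex.conj_eq_iff_re.1 ?_
    rw [inner_conj_symm, h.sym_pow]
  let W' := W.toContinuousLinearMap
  have hkey : ∀ n x, ⟪q, (T ^ n) (D (ContinuousLinearMap.adjoint W' x))⟫_ℂ = ∑' p, (c (n + p) : ℂ) * (x : ℕ → ℂ) p := by
    intro n x
    rw [← h.sym_pow, ContinuousLinearMap.adjoint_inner_right]
    have h1 := lp.hasSum_inner (𝕜 := ℂ) (W ((T ^ n) (D q))) x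
    change ⟪W ((T ^ n) (D q)), x⟫_ℂ = _
    rw [← h1.tsum_eq]
    refine tsum_congr fun p => ?_
    rw [RCLike.inner_apply', hW, ← pw_add, add_comm p n, ← hc]
    congr 1
    exact Complex.conj_ofReal _
  have hd1 := h.diag.conj_isometry W
  have hd2 := hdt.conj_isometry W
  have hH1 : IsHankelOp (fun n => (c n : ℂ)) (W'.comp (D.comp (ContinuousLinearMap.adjoint W'))) := by
    intro x n
    rw [← hkey]
    exact hW _ n
  have hH2 : IsHankelOp (shiftSeq fun n => (c n : ℂ)) (W'.comp ((T.comp D).comp (ContinuousLinearMap.adjoint W'))) := by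
    intro x n
    have h1 := hkey (n + 1) x
    rw [pw_succ'] at h1
    have h2 : ∀ p, shiftSeq (fun n => (c n : ℂ)) (n + p) = c (n + 1 + p) := by
      intro p; simp only [shiftSeq]; rw [show n + p + 1 = n + 1 + p by ring]
    simp_rw [h2, ← h1]
    exact hW _ n
  refine ⟨c, ?_, _, _, hH1, hH2, hd1.eigs h.inj h.ne0, hd1.finrank h.inj h.ne0, hd2.eigs hγi hγ0, hd2.finrank hγi hγ0⟩
  rw [h12_iff, ← hk_hs hH1, hd1.hs_sum]
  exact h.summ.tsum_ofReal_ne_top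

lemma exists_T {D Dt : E →L[ℂ] E} {ζ : ℕ → ℝ} {e : HilbertBasis ℕ ℂ E} {q : E} (hD : IsDiag D ζ e)
    (h0 : ∀ j, ζ j ≠ 0) (hid : ∀ x, ‖Dt x‖ ^ 2 = ‖D x‖ ^ 2 - ‖⟪q, D x⟫_ℂ‖ ^ 2) :
    ∃ T : E →L[ℂ] E, (∀ x, T (D x) = Dt x) ∧ ∀ x y, ⟪T x, T y⟫_ℂ = ⟪x, y⟫_ℂ - ⟪x, q⟫_ℂ * ⟪q, y⟫_ℂ := by
  have hdense : DenseRange D := by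
    have : (LinearMap.range D.toLinearMap).topologicalClosure = ⊤ := by
      rw [Submodule.topologicalClosure_eq_top_iff, Submodule.eq_bot_iff]
      intro z hz
      refine hD.basis_inj h0 (ext_inner_left ℂ fun x => ?_)
      rw [inner_zero_right, ← hD.symm]
      exact (Submodule.mem_orthogonal _ _).1 hz _ ⟨x, rfl⟩
    exact Submodule.dense_iff_topologicalClosure_eq_top.2 this
  have hle : ∀ x, ‖Dt x‖ ≤ 1 * ‖D x‖ := by
    intro x
    rw [one_mul]
    refine le_of_sq_le_sq ?_ (norm_nonneg _)
    rw [hid]; nlinarith [sq_nonneg ‖⟪q, D x⟫_ℂ‖]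
  let T : E →L[ℂ] E := Dt.toLinearMap.extendOfNorm D.toLinearMap
  have hT : ∀ x, T (D x) = Dt x := fun x =>
    LinearMap.extendOfNorm_eq (f := Dt.toLinearMap) (e := D.toLinearMap) hdense ⟨1, hle⟩ x
  have hn : ∀ y, ‖T y‖ ^ 2 = ‖y‖ ^ 2 - ‖⟪q, y⟫_ℂ‖ ^ 2 := by
    intro y
    refine hdense.induction (P := fun y => ‖T y‖ ^ 2 = ‖y‖ ^ 2 - ‖⟪q, y⟫_ℂ‖ ^ 2) ?_ ?_ y
    · rintro _ ⟨x, rfl⟩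
      rw [hT, hid]
    · exact isClosed_eq (by fun_prop) (by fun_prop)
  refine ⟨T, hT, fun x y => ?_⟩
  let A : E →L[ℂ] E := (ContinuousLinearMap.adjoint T).comp T - ContinuousLinearMap.id ℂ E + (innerSL ℂ q).smulRight q
  have hA : A.toLinearMap = 0 := by
    rw [← inner_map_self_eq_zero]
    intro x
    change ⟪ContinuousLinearMap.adjoint T (T x) - x + ⟪q, x⟫_ℂ • q, x⟫_ℂ = 0
    rw [inner_add_left, inner_sub_left, ContinuousLinearMap.adjoint_inner_left, inner_smul_left,
      inner_self_eq_norm_sq_to_K, inner_self_eq_norm_sq_to_K, mul_comm, Complex.mul_conj,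
      Complex.normSq_eq_norm_sq]
    have := congrArg Complex.ofReal (hn x)
    push_cast at this ⊢
    rw [sub_add_eq_add_sub, sub_eq_zero]
    exact (eq_sub_iff_add_eq.1 this)
  have hAx : ContinuousLinearMap.adjoint T (T y) - y + ⟪q, y⟫_ℂ • q = 0 := LinearMap.congr_fun hA y
  have h1 : ContinuousLinearMap.adjoint T (T y) = y - ⟪q, y⟫_ℂ • q := by
    rw [eq_sub_iff_add_eq, ← sub_eq_zero, ← hAx]; abel
  rw [← ContinuousLinearMap.adjoint_inner_right, h1, inner_sub_right, inner_smul_right, mul_comm]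

lemma IsDiag.hs_hasSum {T : E →L[ℂ] E} {γ : ℕ → ℝ} {v : ℕ → E} (h : IsDiag T γ v) (hγ : Summable fun j => γ j ^ 2)
    (e : HilbertBasis ℕ ℂ E) : HasSum (fun n => ‖T (e n)‖ ^ 2) (∑' j, γ j ^ 2) := by
  have h1 := h.hs_sum e
  have hs : Summable (fun n => ‖T (e n)‖ ^ 2) := by
    refine summable_of_ennreal (fun n => by positivity) ?_
    rw [h1]; exact hγ.tsum_ofReal_ne_top
  rw [← ENNReal.ofReal_tsum_of_nonneg (fun _ => by positivity) hs,
    ← ENNReal.ofReal_tsum_of_nonneg (fun _ => by positivity) hγ,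
    ENNReal.ofReal_eq_ofReal_iff (tsum_nonneg fun _ => by positivity) (tsum_nonneg fun _ => by positivity)] at h1
  rw [← h1]; exact hs.hasSum

lemma psd_zero {R : E →L[ℂ] E} (hsym : ∀ x y, ⟪R x, y⟫_ℂ = ⟪x, R y⟫_ℂ) (hpos : ∀ x, 0 ≤ (⟪R x, x⟫_ℂ).re)
    {x : E} (hx : (⟪R x, x⟫_ℂ).re = 0) : R x = 0 := by
  have h1 : ∀ s : ℝ, 0 ≤ s ^ 2 * (⟪R (R x), R x⟫_ℂ).re - 2 * s * ‖R x‖ ^ 2 := by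
    intro s
    have h2 := hpos (x - (s : ℂ) • R x)
    have h3 : (⟪R x, R x⟫_ℂ).re = ‖R x‖ ^ 2 := by
      rw [inner_self_eq_norm_sq_to_K]; norm_cast
    have h4 : ⟪R (R x), x⟫_ℂ = ⟪R x, R x⟫_ℂ := hsym _ _
    rw [map_sub, map_smul, inner_sub_left, inner_sub_right, inner_sub_right, inner_smul_left, inner_smul_left,
      inner_smul_right, inner_smul_right, h4, Complex.conj_ofReal] at h2
    simp only [Complex.sub_re, Complex.re_ofReal_mul, hx, h3] at h2
    linarith
  set K := (⟪R (R x), R x⟫_ℂ).re with hK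
  have hK0 : 0 ≤ K := hpos _
  have h5 := h1 (‖R x‖ ^ 2 / (K + 1))
  have h6 : ‖R x‖ ^ 2 = 0 := by
    by_contra hne
    have hp : 0 < ‖R x‖ ^ 2 := lt_of_le_of_ne (by positivity) (Ne.symm hne)
    have h7 : (‖R x‖ ^ 2 / (K + 1)) ^ 2 * K - 2 * (‖R x‖ ^ 2 / (K + 1)) * ‖R x‖ ^ 2 =
      -((‖R x‖ ^ 2 / (K + 1)) ^ 2 * (K + 2)) := by field_simp; ring
    rw [h7] at h5
    have : 0 < (‖R x‖ ^ 2 / (K + 1)) ^ 2 * (K + 2) := by positivity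
    linarith
  simpa using h6

lemma trace_id {D Dt : E →L[ℂ] E} {ζ γ : ℕ → ℝ} {e : HilbertBasis ℕ ℂ E} {v : ℕ → E} {q : E} (hD : IsDiag D ζ e)
    (hDt : IsDiag Dt γ v) (hζ : Summable fun j => ζ j ^ 2) (hγ : Summable fun j => γ j ^ 2) (hq : ‖q‖ ≤ 1)
    (hG : ∀ m, D (D (v m)) - ⟪D q, v m⟫_ℂ • D q = ((γ m ^ 2 : ℝ) : ℂ) • v m)
    (htr : ‖D q‖ ^ 2 = ∑' j, (ζ j ^ 2 - γ j ^ 2)) (x : E) :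
    ‖Dt x‖ ^ 2 = ‖D x‖ ^ 2 - ‖⟪q, D x⟫_ℂ‖ ^ 2 := by
  let R : E →L[ℂ] E := D.comp D - (innerSL ℂ (D q)).smulRight (D q) - Dt.comp Dt
  have hR : ∀ x, R x = D (D x) - ⟪D q, x⟫_ℂ • D q - Dt (Dt x) := fun x => rfl
  have hRin : ∀ x y, ⟪R x, y⟫_ℂ = ⟪D x, D y⟫_ℂ - ⟪x, D q⟫_ℂ * ⟪D q, y⟫_ℂ - ⟪Dt x, Dt y⟫_ℂ := by
    intro x y
    rw [hR, inner_sub_left, inner_sub_left, inner_smul_left, inner_conj_symm, hD.symm, hDt.symm]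
  have hsym : ∀ x y, ⟪R x, y⟫_ℂ = ⟪x, R y⟫_ℂ := by
    intro x y
    rw [← inner_conj_symm x, hRin, hRin]
    simp only [map_sub, map_mul, inner_conj_symm]
    ring
  have hre : ∀ x, (⟪R x, x⟫_ℂ).re = ‖D x‖ ^ 2 - ‖⟪q, D x⟫_ℂ‖ ^ 2 - ‖Dt x‖ ^ 2 := by
    intro x
    rw [hRin, hD.symm q, ← inner_conj_symm x, hD.symm q, inner_self_eq_norm_sq_to_K, inner_self_eq_norm_sq_to_K, mul_comm, Complex.mul_conj,
      Complex.normSq_eq_norm_sq]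
    norm_cast
  have hRv : ∀ m, R (v m) = 0 := by
    intro m
    rw [hR, hG, hDt.apply_u, map_smul, hDt.apply_u, smul_smul, sub_eq_zero]
    push_cast; rw [sq]
  have hpos : ∀ x, 0 ≤ (⟪R x, x⟫_ℂ).re := by
    intro x
    obtain ⟨p, hp⟩ := ortho_summable hDt.1 (hDt.1.inner_products_summable (x := x))
    have hpc := ortho_coef hDt.1 hp
    have hRp : R p = 0 := by
      have := hp.mapL R
      simp only [map_smul, hRv, smul_zero] at this
      exact this.unique hasSum_zero
    have hr : Dt (x - p) = 0 := hDt.zero_of_perp fun j => by rw [inner_sub_right, hpc, sub_self]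
    have h1 : ⟪R x, x⟫_ℂ = ⟪R (x - p), x - p⟫_ℂ := by
      rw [map_sub, hRp, sub_zero, inner_sub_right, hsym x p, hRp, inner_zero_right, sub_zero]
    rw [h1, hre, hr]
    have h2 : ‖⟪q, D (x - p)⟫_ℂ‖ ≤ ‖D (x - p)‖ := by
      refine (norm_inner_le_norm _ _).trans ?_
      exact mul_le_of_le_one_left (norm_nonneg _) hq
    have := pow_le_pow_left₀ (norm_nonneg _) h2 2
    simp only [norm_zero]; linarith
  have hsumR : HasSum (fun j => (⟪R (e j), e j⟫_ℂ).re) 0 := by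
    have h1 := hD.hs_hasSum hζ e
    have h2 := hDt.hs_hasSum hγ e
    have h3 := ortho_norm_sq e.orthonormal (e.hasSum_repr (D q))
    have h4 := (h1.sub h3).sub h2
    have h5 : ∑' j, ζ j ^ 2 - ‖D q‖ ^ 2 - ∑' j, γ j ^ 2 = 0 := by
      rw [htr, hζ.tsum_sub hγ]; ring
    rw [h5] at h4
    refine h4.congr_fun fun j => ?_
    rw [hre, e.repr_apply_apply, ← hD.symm q, norm_inner_symm]
  have hRe : ∀ j, R (e j) = 0 := fun j =>
    psd_zero hsym hpos (congrFun ((hasSum_zero_iff_of_nonneg fun j => hpos (e j)).1 hsumR) j)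
  have hR0 : R = 0 := clm_ext_basis e fun n => by rw [hRe]; rfl
  have := hre x
  rw [hR0] at this
  simp at this
  linarith

end ConstrSec

section FinalSec

lemma real_inner_L2 {x y : L2} {a b : ℕ → ℝ} (hx : ∀ j, (x : ℕ → ℂ) j = a j) (hy : ∀ j, (y : ℕ → ℂ) j = b j)
    {s : ℝ} (h : HasSum (fun j => a j * b j) s) : ⟪x, y⟫_ℂ = s := by
  refine (lp.hasSum_inner (𝕜 := ℂ) x y).unique ?_
  have h1 : HasSum (fun j => ((a j * b j : ℝ) : ℂ)) (s : ℂ) := by exact_mod_cast h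
  refine h1.congr_fun fun j => ?_
  rw [hx, hy, RCLike.inner_apply']
  push_cast
  congr 1
  exact (Complex.conj_ofReal _)

lemma exists_L2 {a : ℕ → ℝ} (h : Summable fun j => a j ^ 2) : ∃ x : L2, ∀ j, (x : ℕ → ℂ) j = a j := by
  have hm : Memℓp (fun j => (a j : ℂ)) 2 := by
    rw [memℓp_gen_iff (by norm_num)]
    simpa using h
  exact ⟨⟨_, hm⟩, fun _ => rfl⟩

lemma norm_L2 {x : L2} {a : ℕ → ℝ} (hx : ∀ j, (x : ℕ → ℂ) j = a j) : HasSum (fun j => a j ^ 2) (‖x‖ ^ 2) := by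
  have := L2_norm_sq x
  simpa [hx] using this

theorem existence {ζ γ : ℕ → ℝ} (hI : Interl (fun j => ζ j ^ 2) (fun j => γ j ^ 2))
    (hζi : Function.Injective ζ) (hγi : Function.Injective γ) (hζ0 : ∀ j, ζ j ≠ 0) (hγ0 : ∀ j, γ j ≠ 0)
    {C : ℝ} (hζC : ∀ j, |ζ j| ≤ C) (hγC : ∀ j, |γ j| ≤ C) :
    ∃ c : ℕ → ℝ,
      InH12 (fun n => (c n : ℂ)) ∧
      ∃ Γ Γt : L2 →L[ℂ] L2,
        IsHankelOp (fun n => (c n : ℂ)) Γ ∧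
        IsHankelOp (shiftSeq fun n => (c n : ℂ)) Γt ∧
        {z : ℂ | z ≠ 0 ∧ Module.End.HasEigenvalue Γ.toLinearMap z}
          = Set.range (fun j : ℕ => (ζ j : ℂ)) ∧
        (∀ j : ℕ, Module.finrank ℂ
          (Module.End.eigenspace Γ.toLinearMap (ζ j : ℂ)) = 1) ∧
        {z : ℂ | z ≠ 0 ∧ Module.End.HasEigenvalue Γt.toLinearMap z}
          = Set.range (fun j : ℕ => (γ j : ℂ)) ∧
        (∀ j : ℕ, Module.finrank ℂ
          (Module.End.eigenspace Γt.toLinearMap (γ j : ℂ)) = 1) := by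
  set a := Interl.aw (fun j => ζ j ^ 2) (fun j => γ j ^ 2) with ha
  have hapos : ∀ j, 0 < a j := hI.aw_pos
  have hν2 : ∀ j, nuv ζ γ j ^ 2 = a j := fun j => Real.sq_sqrt (hapos j).le
  have hνpos : ∀ j, 0 < nuv ζ γ j := fun j => Real.sqrt_pos.2 (hapos j)
  have hZg : ∀ j m, ζ j ^ 2 - γ m ^ 2 ≠ 0 := fun j m => sub_ne_zero.2 (hI.Z_ne_g j m)
  obtain ⟨D, hD⟩ := exists_isDiag stdB.orthonormal hζC
  have hDc : ∀ x j, (D x : ℕ → ℂ) j = ζ j * (x : ℕ → ℂ) j := by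
    intro x j
    rw [← stdB_inner, hD.inner_left, stdB_inner]
  -- the vector q
  have hqa : ∀ j, (nuv ζ γ j / ζ j) ^ 2 = a j / ζ j ^ 2 := fun j => by rw [div_pow, hν2]
  obtain ⟨q, hq⟩ := exists_L2 (a := fun j => nuv ζ γ j / ζ j) (by simp_rw [hqa]; exact hI.aw_div_summable)
  have hq1 : ‖q‖ ≤ 1 := by
    have h1 := norm_L2 hq
    simp_rw [hqa] at h1
    have h2 : ‖q‖ ^ 2 ≤ 1 ^ 2 := by rw [← h1.tsum_eq, one_pow]; exact hI.aw_div_tsum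
    exact le_of_sq_le_sq h2 zero_le_one
  have hDq : ∀ j, (D q : ℕ → ℂ) j = nuv ζ γ j := by
    intro j
    rw [hDc, hq]; push_cast
    rw [mul_div_cancel₀]
    exact_mod_cast hζ0 j
  -- the vectors w
  have hw : ∀ m, ∃ w : L2, ∀ j, (w : ℕ → ℂ) j = ((nuv ζ γ j / (ζ j ^ 2 - γ m ^ 2) : ℝ) : ℂ) := by
    intro m
    obtain ⟨δ, hδ, hgap⟩ := hI.gap m
    refine exists_L2 ?_
    refine (hI.aw_hasSum.summable.mul_right (1 / δ ^ 2)).of_nonneg_of_le (fun _ => by positivity) fun j => ?_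
    rw [div_pow, hν2, div_eq_mul_one_div]
    have : δ ^ 2 ≤ (ζ j ^ 2 - γ m ^ 2) ^ 2 := by
      rw [← sq_abs (ζ j ^ 2 - γ m ^ 2)]
      exact pow_le_pow_left₀ hδ.le (hgap j) 2
    exact mul_le_mul_of_nonneg_left (one_div_le_one_div_of_le (by positivity) this) (hapos j).le
  choose w hw using hw
  have hνw : ∀ m, ⟪D q, w m⟫_ℂ = 1 := by
    intro m
    have := real_inner_L2 hDq (hw m) (s := 1) ((hI.aw_eq_one m).congr_fun fun j => by rw [← ha, ← hν2]; ring)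
    simpa using this
  have hww : ∀ m n, m ≠ n → ⟪w m, w n⟫_ℂ = 0 := by
    intro m n hmn
    have hne : γ m ^ 2 - γ n ^ 2 ≠ 0 := sub_ne_zero.2 fun e => hmn (hI.antig.injective e)
    have h1 := ((hI.aw_eq_one m).sub (hI.aw_eq_one n)).mul_left (γ m ^ 2 - γ n ^ 2)⁻¹
    rw [sub_self, mul_zero] at h1
    have := real_inner_L2 (hw m) (hw n) (s := 0) (h1.congr_fun fun j => by
      have e1 := hZg j m
      have e2 := hZg j n
      rw [← ha, ← hν2]
      field_simp
      ring)
    simpa using this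
  have hw0 : ∀ m, w m ≠ 0 := by
    intro m h0
    have := hνw m
    rw [h0, inner_zero_right] at this
    exact zero_ne_one this
  have hwn : ∀ m, (‖w m‖ : ℂ) ≠ 0 := fun m => by exact_mod_cast norm_ne_zero_iff.2 (hw0 m)
  let v : ℕ → L2 := fun m => ((‖w m‖ : ℂ)⁻¹) • w m
  have hv : Orthonormal ℂ v := by
    constructor
    · intro m
      have := norm_ne_zero_iff.2 (hw0 m)
      simp only [v, norm_smul]; simp [this]
    · intro m n hmn
      simp only [v]
      rw [inner_smul_left, inner_smul_right, hww m n hmn]; simp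
  obtain ⟨Dt, hDt⟩ := exists_isDiag hv hγC
  have hGw : ∀ m, D (D (w m)) - ⟪D q, w m⟫_ℂ • D q = ((γ m ^ 2 : ℝ) : ℂ) • w m := by
    intro m
    rw [hνw, one_smul]
    refine L2_ext fun j => ?_
    change (D (D (w m)) : ℕ → ℂ) j - (D q : ℕ → ℂ) j = ((γ m ^ 2 : ℝ) : ℂ) * (w m : ℕ → ℂ) j
    rw [hDc, hDc, hDq, hw]
    have e1 := hZg j m
    have e2 : (ζ j : ℂ) ^ 2 - (γ m : ℂ) ^ 2 ≠ 0 := by exact_mod_cast e1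
    push_cast
    field_simp
    ring
  have hG : ∀ m, D (D (v m)) - ⟪D q, v m⟫_ℂ • D q = ((γ m ^ 2 : ℝ) : ℂ) • v m := by
    intro m
    simp only [v]
    rw [map_smul, map_smul, inner_smul_right, smul_comm _ _ (w m), ← hGw, smul_sub, smul_smul]
  have htr : ‖D q‖ ^ 2 = ∑' j, (ζ j ^ 2 - γ j ^ 2) := by
    refine (norm_L2 hDq).unique ?_
    simp_rw [hν2]
    exact hI.aw_hasSum
  have hid := trace_id hD hDt hI.summ hI.summ_g hq1 hG htr
  obtain ⟨T, hTD, hTin⟩ := exists_T hD hζ0 hid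
  have hTDe : T.comp D = Dt := by ext1 x; exact hTD x
  have hM : Model D T ζ stdB q :=
    { diag := hD
      inj := hζi
      ne0 := hζ0
      summ := hI.summ
      Tin := hTin
      TD := fun x y => by rw [hTD, hTD, hDt.symm]
      q0 := fun j => by
        rw [← inner_conj_symm, stdB_inner, hq, Complex.conj_ofReal]
        exact_mod_cast div_ne_zero (hνpos j).ne' (hζ0 j) }
  exact hM.conclude (by rw [hTDe]; exact hDt) hγi hγ0

end FinalSec

/-- Given sequences `(ζ_j)_{j≥1}`, `(γ_m)_{m≥1}` of reals (indexed here from `0`) with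
`|ζ_1| > |γ_1| > |ζ_2| > |γ_2| > … > 0` and `Σ ζ_j² < ∞`, there is a unique real sequence
`c ∈ h^{1/2}` such that the nonzero eigenvalues of the self-adjoint operator `Γ_c` are
exactly the `ζ_j`, all simple, and the nonzero eigenvalues of `Γ̃_c` are exactly the
`γ_m`, all simple. -/
theorem statement1 (ζ γ : ℕ → ℝ)
    (h1 : ∀ j : ℕ, |γ j| < |ζ j|)
    (h2 : ∀ j : ℕ, |ζ (j + 1)| < |γ j|)
    (h3 : ∀ j : ℕ, 0 < |γ j|)
    (hsum : Summable fun j : ℕ => ζ j ^ 2) :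
    ∃! c : ℕ → ℝ,
      InH12 (fun n => (c n : ℂ)) ∧
      ∃ Γ Γt : L2 →L[ℂ] L2,
        IsHankelOp (fun n => (c n : ℂ)) Γ ∧
        IsHankelOp (shiftSeq fun n => (c n : ℂ)) Γt ∧
        {z : ℂ | z ≠ 0 ∧ Module.End.HasEigenvalue Γ.toLinearMap z}
          = Set.range (fun j : ℕ => (ζ j : ℂ)) ∧
        (∀ j : ℕ, Module.finrank ℂ
          (Module.End.eigenspace Γ.toLinearMap (ζ j : ℂ)) = 1) ∧
        {z : ℂ | z ≠ 0 ∧ Module.End.HasEigenvalue Γt.toLinearMap z}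
          = Set.range (fun j : ℕ => (γ j : ℂ)) ∧
        (∀ j : ℕ, Module.finrank ℂ
          (Module.End.eigenspace Γt.toLinearMap (γ j : ℂ)) = 1) := by
  have hI : Interl (fun j => ζ j ^ 2) (fun j => γ j ^ 2) :=
    { gZ := fun j => sq_lt_sq.2 (h1 j)
      Zg := fun j => sq_lt_sq.2 (h2 j)
      pos := fun j => pow_pos (h3 j) 2 |>.trans_eq (sq_abs _)
      summ := hsum }
  have hγ0 : ∀ j, γ j ≠ 0 := fun j => abs_pos.1 (h3 j)
  have hζ0 : ∀ j, ζ j ≠ 0 := fun j => abs_pos.1 ((h3 j).trans (h1 j))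
  have hζi : Function.Injective ζ := fun i j e => hI.antiZ.injective (congrArg (· ^ 2) e)
  have hγi : Function.Injective γ := fun i j e => hI.antig.injective (congrArg (· ^ 2) e)
  have hζC : ∀ j, |ζ j| ≤ |ζ 0| := fun j => sq_le_sq.1 (hI.antiZ.antitone (Nat.zero_le j))
  obtain ⟨c, hc⟩ := existence hI hζi hγi hζ0 hγ0 hζC (fun j => (h1 j).le.trans (hζC j))
  refine ⟨c, hc, ?_⟩
  rintro c' ⟨hc', Γ', Γt', a1, a2, a3, a4, a5, a6⟩
  obtain ⟨hc, Γ, Γt, b1, b2, b3, b4, b5, b6⟩ := hc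
  funext n
  have e1 := uniq_formula hI hζi hγi hζ0 hγ0 hc' a1 a2 a3 a4 a5 a6 n
  have e2 := uniq_formula hI hζi hγi hζ0 hγ0 hc b1 b2 b3 b4 b5 b6 n
  exact_mod_cast e1.trans e2.symm

end
end
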